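/- arXiv:1209.3948 — 4 statements merged into one kernel-verified Lean document; each statement's English description precedes it below -/
import Mathlib

section
/- Let H be a complex Hilbert space, n ≥ 1, and let B₁,…,Bₙ be bounded self-adjoint operators on H that pairwise commute, and let C₁,…,Cₙ be bounded self-adjoint operators on H that pairwise commute. Then for every s = (s₁,…,sₙ) ∈ ℝⁿ, ‖exp(i(s₁B₁ + ⋯ + sₙBₙ)) − exp(i(s₁C₁ + ⋯ + sₙCₙ))‖ ≤ ∑_{j=1}^{n} |sⱼ| ‖Bⱼ − Cⱼ‖, where exp is the exponential of a bounded operator and the norms are operator norms. -/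
theorem aux_norm_exp_le_one {H : Type*} [NormedAddCommGroup H] [InnerProductSpace ℂ H]
    [CompleteSpace H] (X : H →L[ℂ] H) (hX : X ∈ skewAdjoint (H →L[ℂ] H)) :
    ‖NormedSpace.exp X‖ ≤ 1 := by
  let _ : NormedAlgebra ℚ (H →L[ℂ] H) := NormedAlgebra.restrictScalars ℚ ℂ (H →L[ℂ] H)
  have hu : star (NormedSpace.exp X) * NormedSpace.exp X = 1 := by
    rw [NormedSpace.star_exp, skewAdjoint.mem_iff.mp hX,
      ← NormedSpace.exp_add_of_commute (Commute.neg_left (Commute.refl X))]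
    simp
  have h1 := CStarRing.norm_star_mul_self (x := NormedSpace.exp X)
  rw [hu] at h1
  have h2 : ‖(1 : H →L[ℂ] H)‖ ≤ 1 := ContinuousLinearMap.norm_id_le
  nlinarith [norm_nonneg (NormedSpace.exp X)]

theorem aux_norm_exp_sub_exp_le {H : Type*} [NormedAddCommGroup H] [InnerProductSpace ℂ H]
    [CompleteSpace H] (X Y : H →L[ℂ] H) (hX : X ∈ skewAdjoint (H →L[ℂ] H))
    (hY : Y ∈ skewAdjoint (H →L[ℂ] H)) :
    ‖NormedSpace.exp X - NormedSpace.exp Y‖ ≤ ‖X - Y‖ := by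
  have key := norm_image_sub_le_of_norm_deriv_le_segment_01'
    (f := fun t : ℝ => NormedSpace.exp (t • X) * NormedSpace.exp ((1 - t) • Y))
    (f' := fun t : ℝ => NormedSpace.exp (t • X) * (X - Y) * NormedSpace.exp ((1 - t) • Y))
    (C := ‖X - Y‖) ?_ ?_
  · simpa using key
  · intro t _
    have h1 := hasDerivAt_exp_smul_const X t
    have h2 := (hasDerivAt_exp_smul_const' Y (1 - t)).scomp t ((hasDerivAt_id t).const_sub 1)
    have h3 := h1.mul h2
    refine HasDerivAt.hasDerivWithinAt ?_
    refine h3.congr_deriv ?_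
    simp only [Function.comp, id, neg_smul, one_smul]
    noncomm_ring
  · intro t _
    have e1 := aux_norm_exp_le_one (t • X) (skewAdjoint.smul_mem t hX)
    have e2 := aux_norm_exp_le_one ((1 - t) • Y) (skewAdjoint.smul_mem (1 - t) hY)
    calc _ ≤ ‖NormedSpace.exp (t • X)‖ * ‖X - Y‖ * ‖NormedSpace.exp ((1 - t) • Y)‖ :=
          (norm_mul_le _ _).trans (by gcongr; exact norm_mul_le _ _)
      _ ≤ 1 * ‖X - Y‖ * 1 := by gcongr
      _ = ‖X - Y‖ := by ring

theorem aux_skew {H : Type*} [NormedAddCommGroup H] [InnerProductSpace ℂ H]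
    [CompleteSpace H] {n : ℕ} (B : Fin n → (H →L[ℂ] H)) (hB : ∀ j, IsSelfAdjoint (B j))
    (s : Fin n → ℝ) : Complex.I • ∑ j, (s j : ℂ) • B j ∈ skewAdjoint (H →L[ℂ] H) := by
  rw [skewAdjoint.mem_iff]
  simp [star_smul, star_sum, (hB _).star_eq]

/-- Lemma 4.2 of the paper: for tuples of pairwise commuting bounded self-adjoint operators
`B₁,…,Bₙ` and `C₁,…,Cₙ` on a complex Hilbert space and `s ∈ ℝⁿ`,
`‖exp(i s·B) − exp(i s·C)‖ ≤ ∑ⱼ |sⱼ| ‖Bⱼ − Cⱼ‖`. -/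
theorem norm_exp_smul_sum_sub_exp_smul_sum_le
    {H : Type*} [NormedAddCommGroup H] [InnerProductSpace ℂ H] [CompleteSpace H]
    (n : ℕ) (hn : 1 ≤ n)
    (B C : Fin n → (H →L[ℂ] H))
    (hB : ∀ j, IsSelfAdjoint (B j)) (hC : ∀ j, IsSelfAdjoint (C j))
    (hBcomm : ∀ i j, Commute (B i) (B j)) (hCcomm : ∀ i j, Commute (C i) (C j))
    (s : Fin n → ℝ) :
    ‖NormedSpace.exp (Complex.I • ∑ j, (s j : ℂ) • B j)
        - NormedSpace.exp (Complex.I • ∑ j, (s j : ℂ) • C j)‖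
      ≤ ∑ j, |s j| * ‖B j - C j‖ := by
  refine (aux_norm_exp_sub_exp_le _ _ (aux_skew B hB s) (aux_skew C hC s)).trans ?_
  rw [← smul_sub, ← Finset.sum_sub_distrib, norm_smul, Complex.norm_I, one_mul]
  refine (norm_sum_le _ _).trans (Finset.sum_le_sum fun j _ => ?_)
  rw [← smul_sub, norm_smul, Complex.norm_real, Real.norm_eq_abs]
end

section
/- Let a, μ ∈ ℝ and let sign denote the sign function with sign(0) = 0. (i) If a ≠ 0 and |μ| ≤ |a|, then (1/2)·∫_{−1}^{1} sign(t·a + μ) dt = μ/|a|. (ii) If |μ| ≥ |a|, then (1/2)·∫_{−1}^{1} sign(t·a + μ) dt = sign(μ). -/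
theorem aux_integral_sign (p q : ℝ) : ∫ x in p..q, Real.sign x = |q| - |p| := by
  have hm : Monotone Real.sign := by
    intro x y h
    unfold Real.sign
    split_ifs <;> linarith
  refine MeasureTheory.integral_eq_of_hasDerivAt_off_countable (fun x : ℝ => |x|) Real.sign
    (Set.countable_singleton (0 : ℝ)) continuous_abs.continuousOn ?_ hm.intervalIntegrable
  rintro x ⟨-, hx⟩
  rcases lt_or_gt_of_ne (show x ≠ 0 from hx) with h | h
  · rw [Real.sign_of_neg h]; exact hasDerivAt_abs_neg h
  · rw [Real.sign_of_pos h]; exact hasDerivAt_abs_pos h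

theorem aux_integral_lin (a μ : ℝ) (ha : a ≠ 0) :
    ∫ t in (-1 : ℝ)..1, Real.sign (t * a + μ) = a⁻¹ * (|a + μ| - |-a + μ|) := by
  simp_rw [mul_comm _ a]
  rw [intervalIntegral.integral_comp_mul_add (fun x => Real.sign x) ha μ, aux_integral_sign]
  simp

/-- Explicit computation of the function `k` of equation (3.3) of the paper
(with the factor `i` removed): for `a, μ ∈ ℝ`,
(i) if `a ≠ 0` and `|μ| ≤ |a|` then `(1/2)∫_{-1}^{1} sign(ta + μ) dt = μ/|a|`;
(ii) if `|μ| ≥ |a|` then `(1/2)∫_{-1}^{1} sign(ta + μ) dt = sign μ`. -/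
theorem half_integral_sign_linear (a μ : ℝ) :
    (a ≠ 0 → |μ| ≤ |a| →
      (1 / 2) * (∫ t in (-1 : ℝ)..1, Real.sign (t * a + μ)) = μ / |a|) ∧
    (|a| ≤ |μ| →
      (1 / 2) * (∫ t in (-1 : ℝ)..1, Real.sign (t * a + μ)) = Real.sign μ) := by
  constructor
  · intro ha h
    rw [aux_integral_lin a μ ha]
    rcases lt_or_gt_of_ne ha with h0 | h0
    · rw [abs_of_neg h0] at h ⊢
      obtain ⟨h1, h2⟩ := abs_le.mp h
      rw [abs_of_nonpos (by linarith : a + μ ≤ 0), abs_of_nonneg (by linarith : 0 ≤ -a + μ)]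
      field_simp
      ring
    · rw [abs_of_pos h0] at h ⊢
      obtain ⟨h1, h2⟩ := abs_le.mp h
      rw [abs_of_nonneg (by linarith : 0 ≤ a + μ), abs_of_nonpos (by linarith : -a + μ ≤ 0)]
      field_simp
      ring
  · intro h
    by_cases ha : a = 0
    · subst ha
      simp only [mul_zero, zero_add, intervalIntegral.integral_const, smul_eq_mul]
      ring
    · rw [aux_integral_lin a μ ha]
      have hμ : μ ≠ 0 := by
        rintro rfl
        simp at h
        exact ha h
      rcases lt_or_gt_of_ne hμ with h0 | h0
      · rw [abs_of_neg h0] at h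
        obtain ⟨h1, h2⟩ := abs_le.mp h
        rw [abs_of_nonpos (by linarith : a + μ ≤ 0), abs_of_nonpos (by linarith : -a + μ ≤ 0),
          Real.sign_of_neg h0]
        field_simp
        ring
      · rw [abs_of_pos h0] at h
        obtain ⟨h1, h2⟩ := abs_le.mp h
        rw [abs_of_nonneg (by linarith : 0 ≤ a + μ), abs_of_nonneg (by linarith : 0 ≤ -a + μ),
          Real.sign_of_pos h0]
        field_simp
        ring
end

section
/- Fix n ≥ 1 and write h⁺(t) = (sign(t) + 1)/2 for t ∈ ℝ. For ε = (ε₁,…,εₙ) ∈ {−1,1}ⁿ, ξ ∈ ℝⁿ with ξ ≠ 0, and μ ∈ ℝ, define r_ε(ξ, μ) = ((ε·ξ)/‖ξ‖₂) · ∏_{j=1}^{n} h⁺(εⱼξⱼ) · ( h⁺(μ)·h⁺(ε·ξ − μ) + h⁺(−μ)·h⁺(ε·ξ + μ) ), where ε·ξ = ∑ⱼ εⱼξⱼ, and set R(ξ, μ) = ∑_{ε ∈ {−1,1}ⁿ} r_ε(ξ, μ). Then R(ξ, μ) = ‖ξ‖₁/‖ξ‖₂ whenever |μ| < ‖ξ‖₁,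 and R(ξ, μ) = 0 whenever |μ| > ‖ξ‖₁. -/
open Finset

/-- Identity (3.6) in the proof of Lemma 3.1 of the paper (with the factor `i` removed).
Here `ε ∈ {-1,1}ⁿ` is encoded by `ε : Fin n → Bool` (`true ↦ 1`, `false ↦ -1`),
`h⁺(t) = (sign t + 1)/2`, `‖ξ‖₁ = ∑ᵢ |ξᵢ|` and `‖ξ‖₂ = √(∑ᵢ ξᵢ²)`. -/
theorem R_of_sum_r_eps (n : ℕ) (hn : 1 ≤ n) (ξ : Fin n → ℝ) (hξ : ξ ≠ 0) (μ : ℝ) :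
    let hp : ℝ → ℝ := fun t => (Real.sign t + 1) / 2
    let sgn : Bool → ℝ := fun b => if b then 1 else -1
    let r : (Fin n → Bool) → ℝ := fun ε =>
      ((∑ j, sgn (ε j) * ξ j) / Real.sqrt (∑ i, (ξ i) ^ 2))
        * (∏ j, hp (sgn (ε j) * ξ j))
        * (hp μ * hp ((∑ j, sgn (ε j) * ξ j) - μ)
            + hp (-μ) * hp ((∑ j, sgn (ε j) * ξ j) + μ))
    let R : ℝ := ∑ ε : Fin n → Bool, r ε
    (|μ| < ∑ i, |ξ i| → R = (∑ i, |ξ i|) / Real.sqrt (∑ i, (ξ i) ^ 2)) ∧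
    ((∑ i, |ξ i|) < |μ| → R = 0) := by
  intro hp sgn r R
  have hpos : ∀ t, 0 < t → hp t = 1 := by
    intro t ht; simp [hp, Real.sign_of_pos ht]
  have hneg : ∀ t, t < 0 → hp t = 0 := by
    intro t ht; simp [hp, Real.sign_of_neg ht]
  have h0 : hp 0 = 1 / 2 := by simp [hp]
  have hadd : ∀ t, hp t + hp (-t) = 1 := by
    intro t
    simp only [hp, Real.sign_neg]; ring
  have hsum : ∑ ε : Fin n → Bool, ∏ j, hp (sgn (ε j) * ξ j) = 1 := by
    have h := Finset.prod_univ_sum (fun _ : Fin n => (Finset.univ : Finset Bool))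
      (fun j b => hp (sgn b * ξ j))
    rw [Fintype.piFinset_univ] at h
    rw [← h]
    apply Finset.prod_eq_one
    intro j _
    simp [sgn, hadd]
  set S := ∑ i, |ξ i| with hS
  set N := Real.sqrt (∑ i, (ξ i) ^ 2) with hN
  have hS0 : 0 ≤ S := Finset.sum_nonneg fun i _ => abs_nonneg _
  have hr : ∀ ε, r ε = (∏ j, hp (sgn (ε j) * ξ j)) *
      (S / N * (hp μ * hp (S - μ) + hp (-μ) * hp (S + μ))) := by
    intro ε
    by_cases hP : ∃ j, sgn (ε j) * ξ j < 0
    · obtain ⟨j, hj⟩ := hP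
      have : ∏ j, hp (sgn (ε j) * ξ j) = 0 :=
        Finset.prod_eq_zero (Finset.mem_univ j) (hneg _ hj)
      simp only [r, this]; ring
    · push Not at hP
      have : ∑ j, sgn (ε j) * ξ j = S := by
        apply Finset.sum_congr rfl
        intro j _
        rw [← abs_of_nonneg (hP j), abs_mul]
        cases ε j <;> simp [sgn]
      simp only [r, this]; ring
  have hR : R = S / N * (hp μ * hp (S - μ) + hp (-μ) * hp (S + μ)) := by
    simp only [R, hr]
    rw [← Finset.sum_mul, hsum, one_mul]
  rw [hR]
  constructor
  · intro h
    obtain ⟨h1, h2⟩ := abs_lt.mp h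
    rw [hpos (S - μ) (by linarith), hpos (S + μ) (by linarith), mul_one, mul_one, hadd, mul_one]
  · intro h
    rcases lt_abs.mp h with h | h
    · rw [hneg (S - μ) (by linarith), hneg (-μ) (by linarith)]; ring
    · rw [hneg (S + μ) (by linarith), hneg μ (by linarith)]; ring
end

section
/- There exists a constant C > 0 such that for every p ∈ (1, ∞), every d ≥ 1, every Lipschitz function f : ℝ → ℝ with Lipschitz constant at most 1, and all d×d Hermitian complex matrices X and Y, the following holds: if X = U·diag(μ₁,…,μ_d)·U* and Y = V·diag(ν₁,…,ν_d)·V* with U, V unitary and μᵢ, νᵢ ∈ ℝ, and one sets f(X) = U·diag(f(μ₁),…,f(μ_d))·U* and f(Y) = V·diag(f(ν₁),…,f(ν_d))·V*, then ‖f(X) − f(Y)‖_p ≤ C·(p²/(p−1))·‖X − Y‖_p. The constant C is independent of p, d, f, X, Y. -/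
open Finset Matrix

/-- The singular values of a square complex matrix: the square roots of the eigenvalues of
the positive semidefinite Hermitian matrix `Mᴴ * M`. -/
noncomputable def singularValues {d : ℕ} (M : Matrix (Fin d) (Fin d) ℂ) : Fin d → ℝ :=
  fun i => Real.sqrt ((Matrix.isHermitian_conjTranspose_mul_self M).eigenvalues i)

/-- The Schatten `p`-norm of a square complex matrix: `(∑ᵢ σᵢ(M)^p)^(1/p)`. -/
noncomputable def schattenNorm {d : ℕ} (p : ℝ) (M : Matrix (Fin d) (Fin d) ℂ) : ℝ :=
  (∑ i, singularValues M i ^ p) ^ (1 / p)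

namespace LS
set_option linter.unusedSectionVars false
set_option linter.unusedDecidableInType false
open scoped ComplexOrder
variable {n : Type*} [Fintype n] [DecidableEq n]

/-- Matrix with given spectral data. -/
noncomputable def Sp (W : Matrix n n ℂ) (η : n → ℝ) : Matrix n n ℂ :=
  W * diagonal (fun i => (η i : ℂ)) * Wᴴ

/-- Real part of the trace. -/
noncomputable def tr (A : Matrix n n ℂ) : ℝ := A.trace.re

lemma tr_add (A B : Matrix n n ℂ) : tr (A + B) = tr A + tr B := by simp [tr]
lemma tr_sub (A B : Matrix n n ℂ) : tr (A - B) = tr A - tr B := by simp [tr]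
lemma tr_neg (A : Matrix n n ℂ) : tr (-A) = - tr A := by simp [tr]
lemma tr_zero : tr (0 : Matrix n n ℂ) = 0 := by simp [tr]
lemma tr_smul (c : ℝ) (A : Matrix n n ℂ) : tr (c • A) = c * tr A := by simp [tr]
lemma tr_comm (A B : Matrix n n ℂ) : tr (A * B) = tr (B * A) := by simp [tr, trace_mul_comm A B]

lemma Sp_mul {W : Matrix n n ℂ} (hW : Wᴴ * W = 1) (a b : n → ℝ) :
    Sp W a * Sp W b = Sp W (fun i => a i * b i) := by
  unfold Sp
  calc W * diagonal (fun i => (a i : ℂ)) * Wᴴ * (W * diagonal (fun i => (b i : ℂ)) * Wᴴ)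
      = W * diagonal (fun i => (a i : ℂ)) * (Wᴴ * W) * diagonal (fun i => (b i : ℂ)) * Wᴴ := by
        simp only [Matrix.mul_assoc]
    _ = _ := by
        rw [hW, Matrix.mul_one, Matrix.mul_assoc W, diagonal_mul_diagonal]
        simp

lemma Sp_add (W : Matrix n n ℂ) (a b : n → ℝ) :
    Sp W a + Sp W b = Sp W (fun i => a i + b i) := by
  unfold Sp
  rw [← Matrix.add_mul, ← Matrix.mul_add, diagonal_add]; simp

lemma Sp_neg (W : Matrix n n ℂ) (a : n → ℝ) :
    - Sp W a = Sp W (fun i => - a i) := by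
  unfold Sp
  rw [← Matrix.neg_mul, ← Matrix.mul_neg, diagonal_neg]; simp [Pi.neg_def]

lemma Sp_sub (W : Matrix n n ℂ) (a b : n → ℝ) :
    Sp W a - Sp W b = Sp W (fun i => a i - b i) := by
  rw [sub_eq_add_neg, Sp_neg, Sp_add]; simp [sub_eq_add_neg]

lemma Sp_smul (W : Matrix n n ℂ) (c : ℝ) (a : n → ℝ) :
    c • Sp W a = Sp W (fun i => c * a i) := by
  unfold Sp
  rw [← Matrix.smul_mul, ← Matrix.mul_smul, ← diagonal_smul]
  congr 3
  funext i; simp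

lemma Sp_one {W : Matrix n n ℂ} (hW : Wᴴ * W = 1) : Sp W (fun _ => 1) = 1 := by
  unfold Sp
  simp [mul_eq_one_comm.mp hW]

lemma Sp_herm (W : Matrix n n ℂ) (a : n → ℝ) : (Sp W a).IsHermitian := by
  unfold Sp IsHermitian
  rw [conjTranspose_mul, conjTranspose_mul, conjTranspose_conjTranspose,
    diagonal_conjTranspose, Matrix.mul_assoc]
  congr 3
  funext i; simp

lemma tr_Sp {W : Matrix n n ℂ} (hW : Wᴴ * W = 1) (a : n → ℝ) : tr (Sp W a) = ∑ i, a i := by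
  unfold tr Sp
  rw [trace_mul_comm, ← Matrix.mul_assoc, hW, Matrix.one_mul, trace_diagonal]
  simp

lemma Sp_psd (W : Matrix n n ℂ) {a : n → ℝ} (ha : ∀ i, 0 ≤ a i) : (Sp W a).PosSemidef := by
  unfold Sp
  apply PosSemidef.mul_mul_conjTranspose_same
  rw [posSemidef_diagonal_iff]
  intro i; exact_mod_cast ha i

lemma Sp_psd_rev {W : Matrix n n ℂ} (hW : Wᴴ * W = 1) {a : n → ℝ} (h : (Sp W a).PosSemidef) :
    ∀ i, 0 ≤ a i := by
  have h2 := h.conjTranspose_mul_mul_same W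
  have : Wᴴ * Sp W a * W = diagonal (fun i => (a i : ℂ)) := by
    unfold Sp
    calc _ = (Wᴴ * W) * diagonal (fun i => (a i : ℂ)) * (Wᴴ * W) := by
            simp only [Matrix.mul_assoc]
      _ = _ := by rw [hW]; simp
  rw [this, posSemidef_diagonal_iff] at h2
  intro i; exact_mod_cast h2 i

lemma exists_Sp {H : Matrix n n ℂ} (hH : H.IsHermitian) :
    ∃ (W : Matrix n n ℂ) (η : n → ℝ), Wᴴ * W = 1 ∧ H = Sp W η ∧ η = hH.eigenvalues := by
  refine ⟨(hH.eigenvectorUnitary : Matrix n n ℂ), hH.eigenvalues, ?_, ?_, rfl⟩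
  · exact (Matrix.mem_unitaryGroup_iff'.mp hH.eigenvectorUnitary.2)
  · conv_lhs => rw [hH.spectral_theorem]
    rw [Unitary.conjStarAlgAut_apply]
    rfl

lemma Sp_charpoly {W : Matrix n n ℂ} (hW : Wᴴ * W = 1) (a : n → ℝ) :
    (Sp W a).charpoly.roots = Multiset.map (fun i => (a i : ℂ)) Finset.univ.val := by
  unfold Sp
  rw [charpoly_mul_comm, ← Matrix.mul_assoc, hW, Matrix.one_mul, charpoly_diagonal,
    Polynomial.roots_prod]
  · simp
  · simp [Finset.prod_ne_zero_iff, Polynomial.X_sub_C_ne_zero]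

lemma Sp_sum_eq {W W' : Matrix n n ℂ} (hW : Wᴴ * W = 1) (hW' : W'ᴴ * W' = 1) {a b : n → ℝ}
    (h : Sp W a = Sp W' b) (φ : ℝ → ℝ) : ∑ i, φ (a i) = ∑ i, φ (b i) := by
  have h1 := Sp_charpoly hW a
  rw [h, Sp_charpoly hW' b] at h1
  have h2 := congrArg (fun s => (Multiset.map (fun z : ℂ => φ z.re) s).sum) h1
  simp only [Multiset.map_map, Function.comp_def, Complex.ofReal_re] at h2
  exact h2.symm

open Classical in
/-- Sum of `p`-th powers of absolute values of eigenvalues. -/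
noncomputable def Np (p : ℝ) (H : Matrix n n ℂ) : ℝ :=
  if h : H.IsHermitian then ∑ i, |h.eigenvalues i| ^ p else 0

lemma Np_Sp (p : ℝ) {W : Matrix n n ℂ} (hW : Wᴴ * W = 1) (a : n → ℝ) :
    Np p (Sp W a) = ∑ i, |a i| ^ p := by
  unfold Np
  rw [dif_pos (Sp_herm W a)]
  obtain ⟨W', η, h1, h2, h3⟩ := exists_Sp (Sp_herm W a)
  rw [← h3]
  exact (Sp_sum_eq hW h1 h2 (fun x => |x| ^ p)).symm

lemma exists_Sp' {H : Matrix n n ℂ} (hH : H.IsHermitian) :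
    ∃ (W : Matrix n n ℂ) (η : n → ℝ), Wᴴ * W = 1 ∧ H = Sp W η := by
  obtain ⟨W, η, h1, h2, -⟩ := exists_Sp hH
  exact ⟨W, η, h1, h2⟩

lemma Np_nonneg (p : ℝ) (H : Matrix n n ℂ) : 0 ≤ Np p H := by
  unfold Np
  split_ifs
  · exact Finset.sum_nonneg fun i _ => Real.rpow_nonneg (abs_nonneg _) _
  · exact le_rfl

lemma Np_smul (p : ℝ) (c : ℝ) {H : Matrix n n ℂ} (hH : H.IsHermitian) :
    Np p (c • H) = |c| ^ p * Np p H := by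
  obtain ⟨W, η, h1, rfl⟩ := exists_Sp' hH
  rw [Sp_smul, Np_Sp p h1, Np_Sp p h1, Finset.mul_sum]
  refine Finset.sum_congr rfl fun i _ => ?_
  rw [abs_mul, Real.mul_rpow (abs_nonneg _) (abs_nonneg _)]

lemma Np_neg (p : ℝ) {H : Matrix n n ℂ} (hH : H.IsHermitian) :
    Np p (- H) = Np p H := by
  obtain ⟨W, η, h1, rfl⟩ := exists_Sp' hH
  rw [Sp_neg, Np_Sp p h1, Np_Sp p h1]; simp

lemma Sp_conj (W V : Matrix n n ℂ) (a : n → ℝ) : V * Sp W a * Vᴴ = Sp (V * W) a := by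
  unfold Sp
  rw [conjTranspose_mul]; simp only [Matrix.mul_assoc]

lemma Np_conj (p : ℝ) {V : Matrix n n ℂ} (hV : Vᴴ * V = 1) {H : Matrix n n ℂ}
    (hH : H.IsHermitian) : Np p (V * H * Vᴴ) = Np p H := by
  obtain ⟨W, η, h1, rfl⟩ := exists_Sp' hH
  rw [Sp_conj, Np_Sp p h1, Np_Sp]
  rw [conjTranspose_mul]
  calc Wᴴ * Vᴴ * (V * W) = Wᴴ * (Vᴴ * V) * W := by simp only [Matrix.mul_assoc]
    _ = 1 := by rw [hV, Matrix.mul_one, h1]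

lemma Np_two {H : Matrix n n ℂ} (hH : H.IsHermitian) : Np 2 H = tr (H * H) := by
  obtain ⟨W, η, h1, rfl⟩ := exists_Sp' hH
  rw [Sp_mul h1, tr_Sp h1, Np_Sp 2 h1]
  refine Finset.sum_congr rfl fun i _ => ?_
  rw [Real.rpow_two, sq_abs, sq]

/-- Overlap formula for the trace of a product. -/
lemma tr_Sp_mul_Sp {W V : Matrix n n ℂ} (a b : n → ℝ) :
    tr (Sp W a * Sp V b) = ∑ i, ∑ j, a i * b j * Complex.normSq ((Wᴴ * V) i j) := by
  have e : tr (Sp W a * Sp V b)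
      = tr (diagonal (fun i => (a i : ℂ)) * (Wᴴ * V) * diagonal (fun i => (b i : ℂ))
        * (Wᴴ * V)ᴴ) := by
    unfold Sp
    rw [Matrix.mul_assoc W, Matrix.mul_assoc W, tr_comm W, conjTranspose_mul,
      conjTranspose_conjTranspose]
    simp only [Matrix.mul_assoc]
  rw [e]
  set Q := Wᴴ * V
  unfold tr
  rw [trace]
  simp only [diag_apply, mul_apply (M := _ * _ * _), mul_diagonal, diagonal_mul, conjTranspose_apply,
    Complex.re_sum]
  refine Finset.sum_congr rfl fun i _ => Finset.sum_congr rfl fun j _ => ?_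
  have : (a i : ℂ) * Q i j * (b j : ℂ) * star (Q i j)
      = ((a i * b j * Complex.normSq (Q i j) : ℝ) : ℂ) := by
    push_cast
    rw [← Complex.mul_conj]
    simp only [Complex.star_def]
    ring
  rw [this, Complex.ofReal_re]

lemma overlap_sum {Q : Matrix n n ℂ} (hQ : Qᴴ * Q = 1) (j : n) :
    ∑ i, Complex.normSq (Q i j) = 1 := by
  have h := congrFun (congrFun hQ j) j
  rw [mul_apply] at h
  simp only [conjTranspose_apply, one_apply_eq] at h
  have h2 := congrArg Complex.re h
  simp only [Complex.re_sum, Complex.one_re] at h2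
  rw [← h2]
  refine Finset.sum_congr rfl fun i _ => ?_
  rw [Complex.star_def, mul_comm, Complex.mul_conj, Complex.ofReal_re]

lemma overlap_sum' {Q : Matrix n n ℂ} (hQ : Qᴴ * Q = 1) (i : n) :
    ∑ j, Complex.normSq (Q i j) = 1 := by
  have h0 : Q * Qᴴ = 1 := mul_eq_one_comm.mp hQ
  have h := congrFun (congrFun h0 i) i
  rw [mul_apply] at h
  simp only [conjTranspose_apply, one_apply_eq] at h
  have h2 := congrArg Complex.re h
  simp only [Complex.re_sum, Complex.one_re] at h2
  rw [← h2]
  refine Finset.sum_congr rfl fun j _ => ?_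
  rw [Complex.star_def, Complex.mul_conj, Complex.ofReal_re]

lemma tr_young {p q : ℝ} (hpq : p.HolderConjugate q) {A B : Matrix n n ℂ} (hA : A.IsHermitian)
    (hB : B.IsHermitian) : tr (A * B) ≤ Np p A / p + Np q B / q := by
  obtain ⟨W, a, h1, rfl⟩ := exists_Sp' hA
  obtain ⟨V, b, h2, rfl⟩ := exists_Sp' hB
  rw [tr_Sp_mul_Sp, Np_Sp p h1, Np_Sp q h2]
  have hQ : (Wᴴ * V)ᴴ * (Wᴴ * V) = 1 := by
    rw [conjTranspose_mul, conjTranspose_conjTranspose]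
    calc Vᴴ * W * (Wᴴ * V) = Vᴴ * (W * Wᴴ) * V := by simp only [Matrix.mul_assoc]
      _ = 1 := by rw [mul_eq_one_comm.mp h1, Matrix.mul_one, h2]
  set Q := Wᴴ * V
  have hb : ∀ i j, a i * b j * Complex.normSq (Q i j)
      ≤ |a i| ^ p / p * Complex.normSq (Q i j) + |b j| ^ q / q * Complex.normSq (Q i j) := by
    intro i j
    rw [← add_mul]
    exact mul_le_mul_of_nonneg_right (Real.young_inequality _ _ hpq) (Complex.normSq_nonneg _)
  calc _ ≤ ∑ i, ∑ j, (|a i| ^ p / p * Complex.normSq (Q i j)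
            + |b j| ^ q / q * Complex.normSq (Q i j)) :=
        Finset.sum_le_sum fun i _ => Finset.sum_le_sum fun j _ => hb i j
    _ = _ := by
        simp only [Finset.sum_add_distrib]
        rw [Finset.sum_comm (f := fun i j => |b j| ^ q / q * Complex.normSq (Q i j))]
        simp only [← Finset.mul_sum, overlap_sum hQ, overlap_sum' hQ, mul_one]
        rw [Finset.sum_div, Finset.sum_div]

lemma exists_dual {p q : ℝ} (hpq : p.HolderConjugate q) {A : Matrix n n ℂ} (hA : A.IsHermitian) :
    ∃ B : Matrix n n ℂ, B.IsHermitian ∧ tr (A * B) = Np p A ∧ Np q B = Np p A := by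
  obtain ⟨W, a, h1, rfl⟩ := exists_Sp' hA
  have hp := hpq.pos
  refine ⟨Sp W (fun i => SignType.sign (a i) * |a i| ^ (p - 1)), Sp_herm _ _, ?_, ?_⟩
  · rw [Sp_mul h1, tr_Sp h1, Np_Sp p h1]
    refine Finset.sum_congr rfl fun i _ => ?_
    rw [← mul_assoc, mul_comm (a i), sign_mul_self]
    rcases eq_or_ne (a i) 0 with h | h
    · simp [h, hp.ne']
    · nth_rewrite 1 [← Real.rpow_one |a i|]
      rw [← Real.rpow_add (abs_pos.mpr h)]; congr 1; ring
  · rw [Np_Sp q h1, Np_Sp p h1]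
    refine Finset.sum_congr rfl fun i _ => ?_
    rcases eq_or_ne (a i) 0 with h | h
    · simp [h, hp.ne', hpq.symm.pos.ne']
    · rw [abs_mul]
      have : |((SignType.sign (a i) : SignType) : ℝ)| = 1 := by
        rcases lt_or_gt_of_ne h with h | h
        · simp [sign_neg h]
        · simp [sign_pos h]
      rw [this, one_mul, abs_of_nonneg (Real.rpow_nonneg (abs_nonneg _) _),
        ← Real.rpow_mul (abs_nonneg _), hpq.sub_one_mul_conj]

lemma exists_pos_neg (p : ℝ) (hp : 0 < p) {A : Matrix n n ℂ} (hA : A.IsHermitian) :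
    ∃ B C : Matrix n n ℂ, B.PosSemidef ∧ C.PosSemidef ∧ A = B - C ∧ Np p B + Np p C = Np p A := by
  obtain ⟨W, a, h1, rfl⟩ := exists_Sp' hA
  refine ⟨Sp W (fun i => max (a i) 0), Sp W (fun i => max (- a i) 0),
    Sp_psd _ (fun i => le_max_right _ _), Sp_psd _ (fun i => le_max_right _ _), ?_, ?_⟩
  · rw [Sp_sub]; congr 1; funext i
    rcases le_total 0 (a i) with h | h
    · rw [max_eq_left h, max_eq_right (by linarith)]; simp
    · rw [max_eq_right h, max_eq_left (by linarith)]; simp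
  · rw [Np_Sp p h1, Np_Sp p h1, Np_Sp p h1, ← Finset.sum_add_distrib]
    refine Finset.sum_congr rfl fun i _ => ?_
    rcases le_total 0 (a i) with h | h
    · rw [max_eq_left h, max_eq_right (by linarith)]; simp [hp.ne']
    · rw [max_eq_right h, max_eq_left (by linarith)]; simp [hp.ne']

end LS


namespace LS
set_option linter.unusedSectionVars false
set_option linter.unusedDecidableInType false
open scoped ComplexOrder
variable {n : Type*} [Fintype n] [DecidableEq n]

/-- The dyadic probability space with `k` coin flips. -/
def Om : ℕ → Type
  | 0 => Unit
  | (k + 1) => Bool × Om k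

section tree
variable {V : Type*} [AddCommGroup V] [Module ℝ V]

/-- Expectation. -/
noncomputable def E : (k : ℕ) → (Om k → V) → V
  | 0, F => F ()
  | (k + 1), F => (1 / 2 : ℝ) • (E k (fun w => F (true, w)) + E k (fun w => F (false, w)))

/-- Martingale transform. -/
noncomputable def T : (k : ℕ) → (ℕ → ℝ) → (Om k → V) → Om k → V
  | 0, _, _, _ => 0
  | (k + 1), c, F, (b, w) => c 0 • (E k (fun w => F (b, w)) - E (k + 1) F)
      + T k (fun i => c (i + 1)) (fun w => F (b, w)) w

lemma E_succ (k : ℕ) (F : Om (k + 1) → V) :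
    E (k + 1) F = (1 / 2 : ℝ) • (E k (fun w => F (true, w)) + E k (fun w => F (false, w))) := rfl

lemma T_succ (k : ℕ) (c : ℕ → ℝ) (F : Om (k + 1) → V) (b : Bool) (w : Om k) :
    T (k + 1) c F (b, w) = c 0 • (E k (fun w => F (b, w)) - E (k + 1) F)
      + T k (fun i => c (i + 1)) (fun w => F (b, w)) w := rfl

lemma E_add (k : ℕ) (F G : Om k → V) : E k (fun w => F w + G w) = E k F + E k G := by
  induction k with
  | zero => rfl
  | succ k ih => simp only [E_succ, ih]; module

lemma E_smul (k : ℕ) (c : ℝ) (F : Om k → V) : E k (fun w => c • F w) = c • E k F := by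
  induction k with
  | zero => rfl
  | succ k ih => simp only [E_succ, ih]; module

lemma E_sub (k : ℕ) (F G : Om k → V) : E k (fun w => F w - G w) = E k F - E k G := by
  induction k with
  | zero => rfl
  | succ k ih => simp only [E_succ, ih]; module

lemma E_const (k : ℕ) (v : V) : E k (fun _ => v) = v := by
  induction k with
  | zero => rfl
  | succ k ih => simp only [E_succ, ih]; module

lemma E_map {V' : Type*} [AddCommGroup V'] [Module ℝ V'] (L : V →ₗ[ℝ] V') (k : ℕ) (F : Om k → V) :
    E k (fun w => L (F w)) = L (E k F) := by
  induction k with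
  | zero => rfl
  | succ k ih => simp only [E_succ, ih]; simp

lemma T_map {V' : Type*} [AddCommGroup V'] [Module ℝ V'] (L : V →ₗ[ℝ] V') (k : ℕ) (c : ℕ → ℝ)
    (F : Om k → V) (w : Om k) :
    T k c (fun w => L (F w)) w = L (T k c F w) := by
  induction k generalizing c with
  | zero => simp [T]
  | succ k ih =>
    obtain ⟨b, w⟩ := w
    rw [T_succ, T_succ, ih, E_map, E_map]; simp

lemma T_add (k : ℕ) (c : ℕ → ℝ) (F G : Om k → V) (w : Om k) :
    T k c (fun w => F w + G w) w = T k c F w + T k c G w := by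
  induction k generalizing c with
  | zero => simp [T]
  | succ k ih =>
    obtain ⟨b, w⟩ := w
    rw [T_succ, T_succ, T_succ, ih, E_add, E_add]; module

lemma T_sub (k : ℕ) (c : ℕ → ℝ) (F G : Om k → V) (w : Om k) :
    T k c (fun w => F w - G w) w = T k c F w - T k c G w := by
  induction k generalizing c with
  | zero => simp [T]
  | succ k ih =>
    obtain ⟨b, w⟩ := w
    rw [T_succ, T_succ, T_succ, ih, E_sub, E_sub]; module

lemma E_T (k : ℕ) (c : ℕ → ℝ) (F : Om k → V) : E k (T k c F) = 0 := by
  induction k generalizing c with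
  | zero => rfl
  | succ k ih =>
    rw [E_succ]
    simp only [T_succ, E_add, E_const, E_succ]
    rw [ih, ih]
    module

end tree

lemma E_mono (k : ℕ) {F G : Om k → ℝ} (h : ∀ w, F w ≤ G w) : E k F ≤ E k G := by
  induction k with
  | zero => exact h ()
  | succ k ih =>
    simp only [E_succ, smul_eq_mul]
    have h1 := ih (F := fun w => F (true, w)) (G := fun w => G (true, w)) fun w => h (true, w)
    have h2 := ih (F := fun w => F (false, w)) (G := fun w => G (false, w)) fun w => h (false, w)
    linarith

/-- trace as a linear functional -/
noncomputable def trL (A : Matrix n n ℂ) : Matrix n n ℂ →ₗ[ℝ] ℝ where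
  toFun B := tr (A * B)
  map_add' B C := by rw [Matrix.mul_add, tr_add]
  map_smul' c B := by rw [Matrix.mul_smul, tr_smul]; rfl

lemma E_tr_mul (k : ℕ) (A : Matrix n n ℂ) (F : Om k → Matrix n n ℂ) :
    E k (fun w => tr (A * F w)) = tr (A * E k F) := E_map (trL A) k F

lemma E_tr (k : ℕ) (F : Om k → Matrix n n ℂ) :
    E k (fun w => tr (F w)) = tr (E k F) := by simpa using E_tr_mul k 1 F

lemma E_psd (k : ℕ) {F : Om k → Matrix n n ℂ} (h : ∀ w, (F w).PosSemidef) :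
    (E k F).PosSemidef := by
  induction k with
  | zero => exact h ()
  | succ k ih =>
    rw [E_succ]
    exact ((ih fun w => h (true, w)).add (ih fun w => h (false, w))).smul (by norm_num)

lemma herm_smul (c : ℝ) {A : Matrix n n ℂ} (h : A.IsHermitian) : (c • A).IsHermitian := by
  unfold IsHermitian at *
  rw [conjTranspose_smul, h]; simp

lemma E_herm (k : ℕ) {F : Om k → Matrix n n ℂ} (h : ∀ w, (F w).IsHermitian) :
    (E k F).IsHermitian := by
  induction k with
  | zero => exact h ()
  | succ k ih =>
    rw [E_succ]
    exact herm_smul _ ((ih fun w => h (true, w)).add (ih fun w => h (false, w)))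

lemma T_herm (k : ℕ) (c : ℕ → ℝ) {F : Om k → Matrix n n ℂ} (h : ∀ w, (F w).IsHermitian)
    (w : Om k) : (T k c F w).IsHermitian := by
  induction k generalizing c with
  | zero => simp [T, IsHermitian]
  | succ k ih =>
    obtain ⟨b, w⟩ := w
    rw [T_succ]
    exact (herm_smul _ ((E_herm k fun w => h (b, w)).sub (E_herm _ h))).add
      (ih _ (fun w => h (b, w)) w)

lemma tr_smul_mul (c : ℝ) (A B : Matrix n n ℂ) : tr (c • A * B) = c * tr (A * B) := by
  rw [Matrix.smul_mul, tr_smul]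

lemma tr_mul_smul (c : ℝ) (A B : Matrix n n ℂ) : tr (A * c • B) = c * tr (A * B) := by
  rw [Matrix.mul_smul, tr_smul]

lemma T_selfadj (k : ℕ) (c : ℕ → ℝ) (F G : Om k → Matrix n n ℂ) :
    E k (fun w => tr (T k c F w * G w)) = E k (fun w => tr (F w * T k c G w)) := by
  induction k generalizing c with
  | zero => simp [T]
  | succ k ih =>
    rw [E_succ, E_succ]
    simp only [T_succ, Matrix.add_mul, Matrix.mul_add, tr_add, E_add, ih, E_tr_mul]
    have e : ∀ (A : Matrix n n ℂ) (F : Om k → Matrix n n ℂ),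
        E k (fun w => tr (F w * A)) = tr (A * E k F) := by
      intro A F; rw [← E_tr_mul]; congr 1; funext w; exact tr_comm _ _
    simp only [e, E_succ, tr_smul_mul, Matrix.sub_mul, Matrix.add_mul, tr_sub, tr_add]
    rw [tr_comm (E k fun w => F (true, w)), tr_comm (E k fun w => F (false, w))
      (E k fun w => G (false, w)),  tr_comm (E k fun w => F (false, w))
      (E k fun w => G (true, w)), tr_comm (E k fun w => F (true, w))
      (E k fun w => G (false, w))]
    simp only [smul_eq_mul]
    ring

lemma tr_sq_nonneg {A : Matrix n n ℂ} (h : A.IsHermitian) : 0 ≤ tr (A * A) := by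
  rw [← Np_two h]; exact Np_nonneg _ _

lemma T_L2 (k : ℕ) (c : ℕ → ℝ) (hc : ∀ i, 0 ≤ c i ∧ c i ≤ 1) {F : Om k → Matrix n n ℂ}
    (hF : ∀ w, (F w).IsHermitian) :
    E k (fun w => tr (T k c F w * T k c F w)) + tr (E k F * E k F)
      ≤ E k (fun w => tr (F w * F w)) := by
  induction k generalizing c with
  | zero => simp [T, E, tr_zero]
  | succ k ih =>
    have key : ∀ b : Bool, E k (fun w => tr (T (k+1) c F (b, w) * T (k+1) c F (b, w)))
        = c 0 ^ 2 * tr ((E k (fun w => F (b, w)) - E (k+1) F) * (E k (fun w => F (b, w)) - E (k+1) F))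
          + E k (fun w => tr (T k (fun i => c (i+1)) (fun w => F (b, w)) w
            * T k (fun i => c (i+1)) (fun w => F (b, w)) w)) := by
      intro b
      simp only [T_succ]
      set D := E k (fun w => F (b, w)) - E (k+1) F
      set G := T k (fun i => c (i+1)) (fun w => F (b, w)) with hG
      have hE : E k G = 0 := E_T _ _ _
      have : ∀ w, tr ((c 0 • D + G w) * (c 0 • D + G w))
          = (c 0 ^ 2 * tr (D * D) + 2 * c 0 * tr (D * G w)) + tr (G w * G w) := by
        intro w
        simp only [Matrix.add_mul, Matrix.mul_add, tr_add, tr_smul_mul, tr_mul_smul,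
          tr_comm (G w) D]
        ring
      simp only [this, E_add, E_const]
      have h3 : E k (fun w => 2 * c 0 * tr (D * G w)) = 0 := by
        have := E_smul k (2 * c 0) (fun w => tr (D * G w))
        simp only [smul_eq_mul] at this
        rw [this, E_tr_mul, hE]; simp [tr_zero]
      rw [h3, add_zero]
    rw [E_succ k (fun w => tr (T (k+1) c F w * T (k+1) c F w)), key true, key false]
    have i1 := ih (fun i => c (i+1)) (fun i => hc (i+1)) (F := fun w => F (true, w)) (fun w => hF (true, w))
    have i2 := ih (fun i => c (i+1)) (fun i => hc (i+1)) (F := fun w => F (false, w)) (fun w => hF (false, w))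
    rw [E_succ k (fun w => tr (F w * F w)), E_succ k F]
    have h1 : (E k (fun w => F (true, w))).IsHermitian := E_herm _ fun w => hF (true, w)
    have h2 : (E k (fun w => F (false, w))).IsHermitian := E_herm _ fun w => hF (false, w)
    set A := E k (fun w => F (true, w))
    set B := E k (fun w => F (false, w))
    have hd : 0 ≤ tr ((A - B) * (A - B)) := tr_sq_nonneg (h1.sub h2)
    have hc2 : c 0 ^ 2 ≤ 1 := by
      have := hc 0; nlinarith
    have e1 : A - (1/2:ℝ) • (A + B) = (1/2:ℝ) • (A - B) := by module
    have e2 : B - (1/2:ℝ) • (A + B) = (-1/2:ℝ) • (A - B) := by module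
    rw [e1, e2]
    simp only [tr_smul_mul, tr_mul_smul, smul_eq_mul]
    have e3 : tr ((A + B) * (A + B)) + tr ((A - B) * (A - B)) = 2 * tr (A * A) + 2 * tr (B * B) := by
      simp only [Matrix.add_mul, Matrix.mul_add, Matrix.sub_mul, Matrix.mul_sub, tr_add, tr_sub]
      ring
    have : c 0 ^ 2 * tr ((A - B) * (A - B)) ≤ tr ((A - B) * (A - B)) := by nlinarith
    linarith

end LS


namespace LS
set_option linter.unusedSectionVars false
set_option linter.unusedDecidableInType false
open scoped ComplexOrder
variable {n : Type*} [Fintype n] [DecidableEq n]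

lemma cuc {lam : ℝ} (hl : 0 < lam) {q0 H : Matrix n n ℂ} (hq : q0.IsHermitian)
    (hH : H.IsHermitian) (hqH : q0 * H = H) :
    ∃ p : Matrix n n ℂ, p.IsHermitian ∧ p * p = p ∧ q0 * p = p ∧ p * q0 = p ∧
      (lam • (1 : Matrix n n ℂ) - (q0 - p) * H * (q0 - p)).PosSemidef ∧
      lam * tr p ≤ tr (p * H) ∧ tr ((q0 - p) * H * (q0 - p)) + tr (p * H) = tr H ∧
      (((2 * lam) • (1 : Matrix n n ℂ) - H).PosSemidef →
        tr (H * H) ≤ tr (((q0 - p) * H * (q0 - p)) * ((q0 - p) * H * (q0 - p)))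
          + 2 * lam * tr (p * H)) := by
  have hHq : H * q0 = H := by
    have := congrArg conjTranspose hqH
    rwa [conjTranspose_mul, hq, hH] at this
  obtain ⟨W, η, h1, rfl⟩ := exists_Sp' hH
  set χ : n → ℝ := fun i => if lam < η i then 1 else 0 with hχ
  have hpp : Sp W χ * Sp W χ = Sp W χ := by
    rw [Sp_mul h1]; congr 1; funext i; simp only [hχ]; split_ifs <;> simp
  have hpH : Sp W χ = Sp W η * Sp W (fun i => χ i * (η i)⁻¹) := by
    rw [Sp_mul h1]; congr 1; funext i; simp only [hχ]; split_ifs with h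
    · have : η i ≠ 0 := by linarith
      field_simp
    · simp
  have hq0p : q0 * Sp W χ = Sp W χ := by
    rw [hpH, ← Matrix.mul_assoc, hqH]
  have hpq0 : Sp W χ * q0 = Sp W χ := by
    have := congrArg conjTranspose hq0p
    rwa [conjTranspose_mul, hq, Sp_herm W χ] at this
  have hqq : (q0 - Sp W χ) * Sp W η * (q0 - Sp W χ) = Sp W (fun i => η i * (1 - χ i)) := by
    rw [Matrix.sub_mul, hqH, Matrix.mul_sub, Matrix.sub_mul, hHq, Matrix.mul_assoc _ _ q0, hHq]
    rw [Sp_mul h1, Sp_sub, Sp_mul h1, Sp_sub]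
    congr 1; funext i; simp only [hχ]; split_ifs <;> simp
  have hlam : ∀ c : ℝ, c • (1 : Matrix n n ℂ) = Sp W (fun _ => c) := by
    intro c; rw [← Sp_one h1, Sp_smul]; simp
  refine ⟨Sp W χ, Sp_herm _ _, hpp, hq0p, hpq0, ?_, ?_, ?_, ?_⟩
  · rw [hqq, hlam, Sp_sub]
    apply Sp_psd
    intro i; simp only [hχ]; split_ifs with h
    · simp; linarith
    · simp; linarith
  · rw [Sp_mul h1, tr_Sp h1, tr_Sp h1, Finset.mul_sum]
    refine Finset.sum_le_sum fun i _ => ?_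
    simp only [hχ]; split_ifs with h
    · simp; linarith
    · simp
  · rw [hqq, Sp_mul h1, tr_Sp h1, tr_Sp h1, tr_Sp h1, ← Finset.sum_add_distrib]
    refine Finset.sum_congr rfl fun i _ => ?_
    ring
  · intro h2
    rw [hlam, Sp_sub] at h2
    have h3 := Sp_psd_rev h1 h2
    rw [hqq, Sp_mul h1, Sp_mul h1, Sp_mul h1, tr_Sp h1, tr_Sp h1, tr_Sp h1, Finset.mul_sum,
      ← Finset.sum_add_distrib]
    refine Finset.sum_le_sum fun i _ => ?_
    have h4 := h3 i
    simp only [hχ]; split_ifs with h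
    · simp; nlinarith
    · simp

lemma tr_sq_le {lam : ℝ} {H : Matrix n n ℂ} (hH : H.PosSemidef)
    (h : (lam • (1 : Matrix n n ℂ) - H).PosSemidef) : tr (H * H) ≤ lam * tr H := by
  obtain ⟨W, η, h1, rfl⟩ := exists_Sp' hH.1
  have h2 := Sp_psd_rev h1 hH
  rw [← Sp_one h1, Sp_smul, Sp_sub] at h
  have h3 := Sp_psd_rev h1 h
  rw [Sp_mul h1, tr_Sp h1, tr_Sp h1, Finset.mul_sum]
  refine Finset.sum_le_sum fun i _ => ?_
  have := h2 i; have := h3 i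
  nlinarith

lemma tr_psd_nonneg {H : Matrix n n ℂ} (hH : H.PosSemidef) : 0 ≤ tr H := by
  obtain ⟨W, η, h1, rfl⟩ := exists_Sp' hH.1
  rw [tr_Sp h1]
  exact Finset.sum_nonneg fun i _ => Sp_psd_rev h1 hH i

lemma psd_conj {q H : Matrix n n ℂ} (hq : q.IsHermitian) (hH : H.PosSemidef) :
    (q * H * q).PosSemidef := by
  have := hH.mul_mul_conjTranspose_same q
  rwa [hq] at this

lemma weak_aux {lam : ℝ} (hl : 0 < lam) (k : ℕ) : ∀ (c : ℕ → ℝ) (_ : ∀ i, 0 ≤ c i ∧ c i ≤ 1)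
    (F : Om k → Matrix n n ℂ) (_ : ∀ w, (F w).PosSemidef) (q0 : Matrix n n ℂ)
    (_ : q0.IsHermitian) (_ : q0 * q0 = q0)
    (_ : (lam • (1 : Matrix n n ℂ) - q0 * E k F * q0).PosSemidef),
    ∃ q G : Om k → Matrix n n ℂ,
      (∀ w, (q w).IsHermitian ∧ q w * q w = q w ∧ q0 * q w = q w ∧ (G w).IsHermitian ∧
        q w * T k c F w * q w = q w * G w * q w) ∧
      E k G = 0 ∧
      E k (fun w => tr (G w * G w)) + tr ((q0 * E k F * q0) * (q0 * E k F * q0))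
        ≤ 2 * lam * tr (q0 * E k F * q0) ∧
      lam * E k (fun w => tr (q0 - q w)) ≤ E k (fun w => tr ((q0 - q w) * F w)) := by
  induction k with
  | zero =>
    intro c hc F hF q0 hq0 hqq h
    refine ⟨fun _ => q0, fun _ => 0, ?_, rfl, ?_, ?_⟩
    · intro w
      refine ⟨hq0, hqq, hqq, by simp [IsHermitian], by simp [T]⟩
    · have hp := psd_conj hq0 (E_psd 0 hF)
      have h1 := tr_sq_le hp h
      have h2 := tr_psd_nonneg hp
      have h3 : E 0 (fun _ : Om 0 => tr ((0 : Matrix n n ℂ) * 0)) = 0 := by simp [E, tr_zero]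
      rw [h3]
      nlinarith
    · simp [E, tr_zero]
  | succ k ih =>
    intro c hc F hF q0 hq0 hqq h
    set f0 := E (k+1) F with hf0
    set f : Bool → Matrix n n ℂ := fun b => E k (fun w => F (b, w)) with hf
    have hfp : ∀ b, (f b).PosSemidef := fun b => E_psd k fun w => hF (b, w)
    have hf0e : f0 = (1/2:ℝ) • (f true + f false) := E_succ k F
    set H : Bool → Matrix n n ℂ := fun b => q0 * f b * q0 with hHdef
    have hHp : ∀ b, (H b).PosSemidef := fun b => psd_conj hq0 (hfp b)
    have hqH : ∀ b, q0 * H b = H b := by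
      intro b; simp only [hHdef]; rw [← Matrix.mul_assoc, ← Matrix.mul_assoc, hqq]
    have hH0 : q0 * f0 * q0 = (1/2:ℝ) • (H true + H false) := by
      rw [hf0e]; simp only [hHdef, Matrix.mul_smul, Matrix.smul_mul, Matrix.mul_add, Matrix.add_mul]
    have h2lam : ∀ b, ((2 * lam) • (1 : Matrix n n ℂ) - H b).PosSemidef := by
      intro b
      have : (2 * lam) • (1 : Matrix n n ℂ) - H b
          = (2:ℝ) • (lam • (1 : Matrix n n ℂ) - q0 * f0 * q0) + H (!b) := by
        rw [hH0]; cases b <;> simp only [Bool.not_true, Bool.not_false] <;> module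
      rw [this]
      exact (h.smul (by norm_num)).add (hHp _)
    choose p hp1 hp2 hp3 hp4 hp5 hp6 hp7 hp8 using fun b => cuc hl hq0 (hHp b).1 (hqH b)
    have hq1q0 : ∀ b, (q0 - p b) * q0 = q0 - p b := by
      intro b; rw [Matrix.sub_mul, hqq, hp4]
    have hq0q1 : ∀ b, q0 * (q0 - p b) = q0 - p b := by
      intro b; rw [Matrix.mul_sub, hqq, hp3]
    have hconj : ∀ b, (q0 - p b) * f b * (q0 - p b) = (q0 - p b) * H b * (q0 - p b) := by
      intro b
      calc (q0 - p b) * f b * (q0 - p b)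
          = ((q0 - p b) * q0) * f b * (q0 * (q0 - p b)) := by rw [hq1q0, hq0q1]
        _ = _ := by simp only [hHdef, Matrix.mul_assoc]
    choose q G hw hG hL hM using fun b => ih (fun i => c (i+1)) (fun i => hc (i+1))
      (fun w => F (b, w)) (fun w => hF (b, w)) (q0 - p b) (hq0.sub (hp1 b))
      (by rw [Matrix.sub_mul, hq0q1, Matrix.mul_sub, hp4, hp2]; simp)
      (by have := hp5 b; rw [← hconj] at this; exact this)
    have hf' : ∀ b, E k (fun w => F (b, w)) = f b := fun b => rfl
    set D : Bool → Matrix n n ℂ := fun b => q0 * (f b - f0) * q0 with hD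
    have hDH : ∀ b, D b = H b - (1/2:ℝ) • (H true + H false) := by
      intro b; simp only [hD]; rw [Matrix.mul_sub, Matrix.sub_mul, hH0]
    have hDherm : ∀ b, (D b).IsHermitian := by
      intro b; rw [hDH]
      exact (hHp b).1.sub (herm_smul _ ((hHp _).1.add (hHp _).1))
    refine ⟨fun w => q w.1 w.2, fun w => c 0 • D w.1 + G w.1 w.2, ?_, ?_, ?_, ?_⟩
    · rintro ⟨b, w⟩
      obtain ⟨a1, a2, a3, a4, a5⟩ := hw b w
      have e3 : q0 * q b w = q b w := by
        rw [← a3, ← Matrix.mul_assoc, hq0q1]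
      have e4 : q b w * q0 = q b w := by
        have := congrArg conjTranspose e3
        rwa [conjTranspose_mul, hq0, a1] at this
      refine ⟨a1, a2, e3, (herm_smul _ (hDherm b)).add a4, ?_⟩
      rw [T_succ]
      simp only [Matrix.mul_add, Matrix.add_mul, a5]
      congr 1
      rw [hf' b]
      simp only [Matrix.mul_smul, Matrix.smul_mul, hD]
      congr 1
      calc q b w * (f b - f0) * q b w = (q b w * q0) * (f b - f0) * (q0 * q b w) := by rw [e3, e4]
        _ = _ := by simp only [Matrix.mul_assoc]
    · rw [E_succ]
      have : ∀ b, E k (fun w => c 0 • D b + G b w) = c 0 • D b := by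
        intro b; rw [E_add, E_const, hG b, add_zero]
      rw [this true, this false, hDH, hDH]; module
    · have key : ∀ b, E k (fun w => tr ((c 0 • D b + G b w) * (c 0 • D b + G b w)))
          = c 0 ^ 2 * tr (D b * D b) + E k (fun w => tr (G b w * G b w)) := by
        intro b
        have : ∀ w, tr ((c 0 • D b + G b w) * (c 0 • D b + G b w))
            = (c 0 ^ 2 * tr (D b * D b) + 2 * c 0 * tr (D b * G b w)) + tr (G b w * G b w) := by
          intro w
          simp only [Matrix.add_mul, Matrix.mul_add, tr_add, tr_smul_mul, tr_mul_smul,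
            tr_comm (G b w) (D b)]
          ring
        simp only [this, E_add, E_const]
        have h3 : E k (fun w => 2 * c 0 * tr (D b * G b w)) = 0 := by
          have := E_smul k (2 * c 0) (fun w => tr (D b * G b w))
          simp only [smul_eq_mul] at this
          rw [this, E_tr_mul, hG b]; simp [tr_zero]
        rw [h3, add_zero]
      rw [E_succ, key true, key false, hH0]
      have i1 := hL true
      have i2 := hL false
      rw [hf', hconj] at i1 i2
      have j1 := hp7 true
      have j2 := hp7 false
      have l1 := hp8 true (h2lam true)
      have l2 := hp8 false (h2lam false)
      have hd : 0 ≤ tr ((H true - H false) * (H true - H false)) :=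
        tr_sq_nonneg ((hHp _).1.sub (hHp _).1)
      have hc2 : c 0 ^ 2 ≤ 1 := by
        have := hc 0; nlinarith
      have e1 : D true = (1/2:ℝ) • (H true - H false) := by rw [hDH]; module
      have e2 : D false = (-1/2:ℝ) • (H true - H false) := by rw [hDH]; module
      rw [e1, e2]
      simp only [tr_smul_mul, tr_mul_smul, smul_eq_mul, tr_smul, tr_add]
      have e3 : tr ((H true + H false) * (H true + H false))
          + tr ((H true - H false) * (H true - H false))
          = 2 * tr (H true * H true) + 2 * tr (H false * H false) := by
        simp only [Matrix.add_mul, Matrix.mul_add, Matrix.sub_mul, Matrix.mul_sub, tr_add, tr_sub]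
        ring
      have : c 0 ^ 2 * tr ((H true - H false) * (H true - H false))
          ≤ tr ((H true - H false) * (H true - H false)) := by nlinarith
      rw [← j1, ← j2]
      linarith
    · rw [E_succ, E_succ]
      have key : ∀ b, lam * E k (fun w => tr (q0 - q b w))
          ≤ E k (fun w => tr ((q0 - q b w) * F (b, w))) := by
        intro b
        have a1 : E k (fun w => tr (q0 - q b w)) = tr (p b) + E k (fun w => tr (q0 - p b - q b w)) := by
          rw [← E_const k (tr (p b)), ← E_add]; congr 1; funext w
          rw [← tr_add]; congr 1; abel
        have a2 : E k (fun w => tr ((q0 - q b w) * F (b, w)))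
            = tr (p b * H b) + E k (fun w => tr ((q0 - p b - q b w) * F (b, w))) := by
          have : tr (p b * H b) = E k (fun w => tr (p b * F (b, w))) := by
            rw [E_tr_mul, hf' b]
            simp only [hHdef]
            rw [← Matrix.mul_assoc, ← Matrix.mul_assoc, hp4, tr_comm, ← Matrix.mul_assoc, hp3]
          rw [this, ← E_add]; congr 1; funext w
          rw [← tr_add, ← Matrix.add_mul]; congr 2; abel
        rw [a1, a2]
        have := hM b
        have := hp6 b
        linarith
      have k1 := key true
      have k2 := key false
      simp only [smul_eq_mul]
      linarith

lemma weak_main {lam : ℝ} (hl : 0 < lam) (k : ℕ) (c : ℕ → ℝ) (hc : ∀ i, 0 ≤ c i ∧ c i ≤ 1)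
    (F : Om k → Matrix n n ℂ) (hF : ∀ w, (F w).PosSemidef) :
    ∃ q G : Om k → Matrix n n ℂ,
      (∀ w, (q w).IsHermitian ∧ q w * q w = q w ∧ (G w).IsHermitian ∧
        q w * T k c F w * q w = q w * G w * q w) ∧
      E k (fun w => tr (G w * G w)) ≤ 2 * lam * E k (fun w => tr (F w)) ∧
      lam * E k (fun w => tr (1 - q w)) ≤ E k (fun w => tr (F w)) := by
  have hf0 := E_psd k hF
  have h1h : (1 : Matrix n n ℂ).IsHermitian := isHermitian_one
  obtain ⟨p, hp1, hp2, hp3, hp4, hp5, hp6, hp7, -⟩ := cuc hl h1h hf0.1 (Matrix.one_mul _)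
  have hqq : (1 - p) * (1 - p) = 1 - p := by
    rw [Matrix.sub_mul, Matrix.mul_sub, Matrix.mul_sub, hp2]; simp
  obtain ⟨q, G, hw, hG, hL, hM⟩ := weak_aux hl k c hc F hF (1 - p) (h1h.sub hp1) hqq hp5
  refine ⟨q, G, fun w => ⟨(hw w).1, (hw w).2.1, (hw w).2.2.2⟩, ?_, ?_⟩
  · have h1 := tr_sq_nonneg (psd_conj (h1h.sub hp1) hf0).1
    have h2 : 0 ≤ tr (p * E k F) := by
      have := tr_psd_nonneg (psd_conj hp1 hf0)
      rwa [tr_comm, ← Matrix.mul_assoc, hp2] at this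
    rw [E_tr k F]
    nlinarith
  · have a1 : E k (fun w => tr (1 - q w)) = tr p + E k (fun w => tr (1 - p - q w)) := by
      rw [← E_const k (tr p), ← E_add]; congr 1; funext w
      rw [← tr_add]; congr 1; abel
    have a2 : E k (fun w => tr ((1 - q w) * F w))
        = tr (p * E k F) + E k (fun w => tr ((1 - p - q w) * F w)) := by
      rw [← E_tr_mul, ← E_add]; congr 1; funext w
      rw [← tr_add, ← Matrix.add_mul]; congr 2; abel
    have a3 : E k (fun w => tr ((1 - q w) * F w)) ≤ E k (fun w => tr (F w)) := by
      apply E_mono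
      intro w
      rw [Matrix.sub_mul, tr_sub, Matrix.one_mul]
      have := tr_psd_nonneg (psd_conj (hw w).1 (hF w))
      rw [tr_comm, ← Matrix.mul_assoc, (hw w).2.1] at this
      linarith
    rw [a1]
    linarith

end LS


namespace LS
set_option linter.unusedSectionVars false
set_option linter.unusedDecidableInType false
open scoped ComplexOrder
variable {n : Type*} [Fintype n] [DecidableEq n]

lemma mat_rank_add_le (A B : Matrix n n ℂ) : (A + B).rank ≤ A.rank + B.rank := by
  unfold Matrix.rank
  rw [Matrix.mulVecLin_add]
  refine (Submodule.finrank_mono (LinearMap.range_add_le _ _)).trans ?_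
  exact Submodule.finrank_add_le_finrank_add_finrank _ _

lemma rank_Sp {W : Matrix n n ℂ} (hW : Wᴴ * W = 1) (a : n → ℝ) :
    ((Sp W a).rank : ℝ) = ∑ i, if a i = 0 then 0 else 1 := by
  have hu : IsUnit W.det := by
    have := congrArg det hW
    rw [det_mul, det_one] at this
    exact IsUnit.of_mul_eq_one_right _ this
  have hu' : IsUnit (Wᴴ).det := by
    have := congrArg det hW
    rw [det_mul, det_one] at this
    exact IsUnit.of_mul_eq_one _ this
  unfold Sp
  rw [rank_mul_eq_left_of_isUnit_det _ _ hu', rank_mul_eq_right_of_isUnit_det _ _ hu,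
    rank_diagonal, Fintype.card_subtype]
  rw [Finset.card_filter]
  push_cast
  refine Finset.sum_congr rfl fun i _ => ?_
  by_cases h : a i = 0 <;> simp [h]

lemma proj_vals {W : Matrix n n ℂ} (hW : Wᴴ * W = 1) {a : n → ℝ}
    (h : Sp W a * Sp W a = Sp W a) : ∀ i, a i = 0 ∨ a i = 1 := by
  intro i
  have h1 : (Sp W (fun i => -(a i * a i - a i) * (a i * a i - a i))).PosSemidef := by
    rw [← Sp_mul hW]
    have : Sp W (fun i => a i * a i - a i) = 0 := by
      rw [← Sp_sub, ← Sp_mul hW, h, sub_self]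
    rw [this, Matrix.mul_zero]; exact PosSemidef.zero
  have h2 := Sp_psd_rev hW h1 i
  have h3 : a i * a i - a i = 0 := by
    nlinarith [sq_nonneg (a i * a i - a i)]
  have : a i * (a i - 1) = 0 := by linarith
  rcases mul_eq_zero.mp this with h | h
  · exact Or.inl h
  · right; linarith

lemma rank_proj {P : Matrix n n ℂ} (hP : P.IsHermitian) (h : P * P = P) : (P.rank : ℝ) = tr P := by
  obtain ⟨W, a, h1, rfl⟩ := exists_Sp' hP
  rw [rank_Sp h1, tr_Sp h1]
  refine Finset.sum_congr rfl fun i _ => ?_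
  rcases proj_vals h1 h i with h | h <;> simp [h]

lemma Np_proj {r : ℝ} (hr : 0 < r) {P : Matrix n n ℂ} (hP : P.IsHermitian) (h : P * P = P) :
    Np r P = tr P := by
  obtain ⟨W, a, h1, rfl⟩ := exists_Sp' hP
  rw [Np_Sp r h1, tr_Sp h1]
  refine Finset.sum_congr rfl fun i _ => ?_
  rcases proj_vals h1 h i with h | h <;> simp [h, hr.ne']

lemma tr_conj_self_nonneg (X : Matrix n n ℂ) : 0 ≤ tr (Xᴴ * X) :=
  tr_psd_nonneg (posSemidef_conjTranspose_mul_self X)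

lemma eq_zero_of_tr {X : Matrix n n ℂ} (h : tr (Xᴴ * X) = 0) : X = 0 := by
  rw [← trace_conjTranspose_mul_self_eq_zero_iff]
  have h2 : (0 : ℂ) ≤ (Xᴴ * X).trace := (posSemidef_conjTranspose_mul_self X).trace_nonneg
  apply Complex.ext
  · exact h
  · exact (Complex.le_def.mp h2).2.symm

/-- Projection onto the intersection of the ranges of two projections. -/
lemma exists_inter {P q : Matrix n n ℂ} (hP : P.IsHermitian) (hPP : P * P = P)
    (hq : q.IsHermitian) (hqq : q * q = q) :
    ∃ R : Matrix n n ℂ, R.IsHermitian ∧ R * R = R ∧ P * R = R ∧ q * R = R ∧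
      tr P - tr (1 - q) ≤ tr R := by
  have h1h : (1 : Matrix n n ℂ).IsHermitian := isHermitian_one
  have hP' : (1 - P) * (1 - P) = 1 - P := by
    rw [Matrix.sub_mul, Matrix.mul_sub, Matrix.mul_sub, hPP]; simp
  have hq' : (1 - q) * (1 - q) = 1 - q := by
    rw [Matrix.sub_mul, Matrix.mul_sub, Matrix.mul_sub, hqq]; simp
  have hPh : (1 - P).IsHermitian := h1h.sub hP
  have hqh : (1 - q).IsHermitian := h1h.sub hq
  set K := (1 - P) + P * (1 - q) * P with hK
  have hPqP : (P * (1 - q) * P).IsHermitian := by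
    unfold IsHermitian
    rw [conjTranspose_mul, conjTranspose_mul, hP, hqh, Matrix.mul_assoc]
  have hKh : K.IsHermitian := hPh.add hPqP
  obtain ⟨W, κ, hW, hKS⟩ := exists_Sp' hKh
  set R := Sp W (fun i => if κ i = 0 then 1 else 0) with hR
  have hRh : R.IsHermitian := Sp_herm _ _
  have hRR : R * R = R := by
    rw [hR, Sp_mul hW]; congr 1; funext i; split_ifs <;> simp
  have hKR : K * R = 0 := by
    rw [hKS, hR, Sp_mul hW]
    have : (fun i => κ i * (if κ i = 0 then (1:ℝ) else 0)) = fun _ => 0 := by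
      funext i; split_ifs with h <;> simp [h]
    rw [this]; unfold Sp; simp
  have hsum : tr (((1 - P) * R)ᴴ * ((1 - P) * R))
      + tr (((1 - q) * P * R)ᴴ * ((1 - q) * P * R)) = 0 := by
    rw [← tr_add]
    have : ((1 - P) * R)ᴴ * ((1 - P) * R) + ((1 - q) * P * R)ᴴ * ((1 - q) * P * R)
        = R * (K * R) := by
      rw [conjTranspose_mul, conjTranspose_mul, conjTranspose_mul, hRh, hPh, hqh, hP, hK]
      calc R * (1 - P) * ((1 - P) * R) + R * (P * (1 - q)) * ((1 - q) * P * R)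
          = R * ((1 - P) * (1 - P)) * R + R * (P * ((1 - q) * (1 - q)) * P) * R := by
            simp only [Matrix.mul_assoc]
        _ = _ := by rw [hP', hq']; simp only [Matrix.mul_add, Matrix.add_mul, Matrix.mul_assoc]
    rw [this, hKR, Matrix.mul_zero, tr_zero]
  have n1 := tr_conj_self_nonneg ((1 - P) * R)
  have n2 := tr_conj_self_nonneg ((1 - q) * P * R)
  have z1 := eq_zero_of_tr (X := (1 - P) * R) (by linarith)
  have z2 := eq_zero_of_tr (X := (1 - q) * P * R) (by linarith)
  have hPR : P * R = R := by
    rw [Matrix.sub_mul, Matrix.one_mul, sub_eq_zero] at z1; exact z1.symm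
  have hqR : q * R = R := by
    rw [Matrix.mul_assoc, hPR, Matrix.sub_mul, Matrix.one_mul, sub_eq_zero] at z2; exact z2.symm
  refine ⟨R, hRh, hRR, hPR, hqR, ?_⟩
  have hrank : K.rank ≤ (1 - P).rank + (1 - q).rank := by
    refine (mat_rank_add_le _ _).trans ?_
    exact Nat.add_le_add_left ((rank_mul_le_left _ _).trans (rank_mul_le_right _ _)) _
  have hrank' : (K.rank : ℝ) ≤ (1 - P).rank + (1 - q).rank := by exact_mod_cast hrank
  rw [rank_proj hPh hP', rank_proj hqh hq', hKS, rank_Sp hW, tr_sub] at hrank'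
  have e1 : tr (1 : Matrix n n ℂ) = ∑ _i : n, (1:ℝ) := by rw [← Sp_one hW, tr_Sp hW]
  have e2 : tr R + ∑ i, (if κ i = 0 then (0:ℝ) else 1) = tr (1 : Matrix n n ℂ) := by
    rw [hR, tr_Sp hW, e1, ← Finset.sum_add_distrib]
    refine Finset.sum_congr rfl fun i _ => ?_
    split_ifs <;> simp
  linarith

lemma count_le {s lam : ℝ} (hs : 2 ≤ s) (hl : 0 < lam) {q G H1 H2 W : Matrix n n ℂ} {η : n → ℝ}
    (hq : q.IsHermitian) (hqq : q * q = q) (hG : G.IsHermitian) (hH2 : H2.IsHermitian)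
    (h1 : q * H1 * q = q * G * q) (hW : Wᴴ * W = 1) (h : H1 + H2 = Sp W η) :
    (∑ i, if 2 * lam < η i then (1:ℝ) else 0)
      ≤ tr (1 - q) + tr (G * G) / lam ^ 2 + Np s H2 / lam ^ s := by
  set χ : n → ℝ := fun i => if 2 * lam < η i then (1:ℝ) else 0 with hχ
  have hPP : Sp W χ * Sp W χ = Sp W χ := by
    rw [Sp_mul hW]; congr 1; funext i; simp only [hχ]; split_ifs <;> simp
  obtain ⟨R, hR, hRR, hPR, hqR, htr⟩ := exists_inter (Sp_herm W χ) hPP hq hqq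
  rw [tr_Sp hW] at htr
  have hRq : R * q = R := by
    have := congrArg conjTranspose hqR
    rwa [conjTranspose_mul, hq, hR] at this
  have hRP : R * Sp W χ = R := by
    have := congrArg conjTranspose hPR
    rwa [conjTranspose_mul, Sp_herm W χ, hR] at this
  -- lower bound
  have lb : 2 * lam * tr R ≤ tr (R * (H1 + H2)) := by
    have hz : (Sp W (fun i => χ i * η i - 2 * lam * χ i)).PosSemidef := by
      apply Sp_psd; intro i; simp only [hχ]; split_ifs with h
      · linarith
      · simp
    have := tr_psd_nonneg (psd_conj hR hz)
    rw [tr_comm, ← Matrix.mul_assoc, hRR, ← Sp_sub, ← Sp_mul hW, ← Sp_smul, Matrix.mul_sub,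
      tr_sub, ← Matrix.mul_assoc, hRP, tr_mul_smul, hRP] at this
    rw [h]; linarith
  have e1 : tr (R * H1) = tr (R * G) := by
    have aux : ∀ X : Matrix n n ℂ, tr (R * X) = tr (R * (q * X * q)) := by
      intro X
      rw [← Matrix.mul_assoc, ← Matrix.mul_assoc, hRq, tr_comm (R * X) q, ← Matrix.mul_assoc, hqR]
    rw [aux H1, h1, ← aux G]
  rw [Matrix.mul_add, tr_add, e1] at lb
  have hs0 : 0 < s := by linarith
  have y1 := tr_young (p := 2) (q := 2) Real.HolderConjugate.two_two hR (herm_smul lam⁻¹ hG)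
  have hcs : (s).HolderConjugate (s / (s - 1)) := Real.HolderConjugate.conjExponent (by linarith)
  have y2 := tr_young hcs.symm hR (herm_smul lam⁻¹ hH2)
  rw [tr_mul_smul, Np_smul _ _ hG, Np_proj (by norm_num) hR hRR, Np_two hG] at y1
  rw [tr_mul_smul, Np_smul _ _ hH2, Np_proj hcs.symm.pos hR hRR] at y2
  rw [abs_of_pos (inv_pos.mpr hl)] at y1 y2
  rw [Real.inv_rpow hl.le] at y1 y2
  rw [Real.rpow_two] at y1
  set g := tr (G * G) / lam ^ 2 with hg
  set h' := Np s H2 / lam ^ s with hh'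
  have y1' : lam⁻¹ * tr (R * G) ≤ tr R / 2 + g / 2 := by
    rw [hg]; convert y1 using 3; rw [div_eq_inv_mul]
  have y2' : lam⁻¹ * tr (R * H2) ≤ tr R * (1 - 1 / s) + h' / s := by
    rw [hh']; convert y2 using 2
    · field_simp
    · rw [div_eq_inv_mul (Np s H2)]
  have hm : 2 * tr R ≤ lam⁻¹ * tr (R * G) + lam⁻¹ * tr (R * H2) := by
    rw [← mul_add, ← div_eq_inv_mul, le_div_iff₀ hl]; linarith
  have hR0 : 0 ≤ tr R := by
    have := tr_conj_self_nonneg R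
    rwa [hR, hRR] at this
  have hg0 : 0 ≤ g := div_nonneg (tr_sq_nonneg hG) (by positivity)
  have hh0 : 0 ≤ h' := div_nonneg (Np_nonneg _ _) (by positivity)
  have hsi : 1 / s ≤ 1 / 2 := by
    apply one_div_le_one_div_of_le <;> linarith
  have hsp : 0 < 1 / s := by positivity
  have : h' / s = h' * (1 / s) := by ring
  rw [this] at y2'
  have : tr R ≤ g + h' := by
    have k1 : tr R * (1/2 + 1/s) ≤ g / 2 + h' * (1/s) := by nlinarith
    have k2 : h' * (1/s) ≤ h' * (1/2) := by gcongr
    nlinarith [mul_nonneg hR0 hsp.le]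
  linarith

/-- Weak-type/strong-type splitting: distribution estimate for the martingale transform. -/
lemma dist_le {s lam M : ℝ} (hs : 2 ≤ s) (hl : 0 < lam) (k : ℕ) (c : ℕ → ℝ)
    (hc : ∀ i, 0 ≤ c i ∧ c i ≤ 1)
    (hM : ∀ F : Om k → Matrix n n ℂ, (∀ w, (F w).IsHermitian) →
      E k (fun w => Np s (T k c F w)) ≤ M * E k (fun w => Np s (F w)))
    (W V : Om k → Matrix n n ℂ) (f g : Om k → n → ℝ) (hW : ∀ w, (W w)ᴴ * W w = 1)
    (hV : ∀ w, (V w)ᴴ * V w = 1) (hf : ∀ w i, 0 ≤ f w i)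
    (hT : ∀ w, T k c (fun w => Sp (W w) (f w)) w = Sp (V w) (g w)) :
    E k (fun w => ∑ i, if 2 * lam < |g w i| then (1:ℝ) else 0)
      ≤ 6 / lam * E k (fun w => ∑ i, if lam < f w i then f w i else 0)
        + 2 * M / lam ^ s * E k (fun w => ∑ i, if lam < f w i then 0 else f w i ^ s) := by
  set F1 : Om k → Matrix n n ℂ := fun w => Sp (W w) (fun i => if lam < f w i then f w i else 0)
    with hF1
  set F2 : Om k → Matrix n n ℂ := fun w => Sp (W w) (fun i => if lam < f w i then 0 else f w i)
    with hF2
  have hsum : (fun w => Sp (W w) (f w)) = fun w => F1 w + F2 w := by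
    funext w; simp only [hF1, hF2]; rw [Sp_add]; congr 1; funext i; split_ifs <;> simp
  have hF1p : ∀ w, (F1 w).PosSemidef := by
    intro w; apply Sp_psd; intro i; split_ifs
    · exact hf w i
    · exact le_rfl
  have hF2h : ∀ w, (F2 w).IsHermitian := fun w => Sp_herm _ _
  obtain ⟨q, G, hw, hG, hq⟩ := weak_main hl k c hc F1 hF1p
  have hT' : ∀ w, T k c F1 w + T k c F2 w = Sp (V w) (g w) := by
    intro w; rw [← T_add, ← hsum]; exact hT w
  have hpt : ∀ w, (∑ i, if 2 * lam < |g w i| then (1:ℝ) else 0)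
      ≤ (2 * tr (1 - q w) + (2 / lam ^ 2) * tr (G w * G w)) + (2 / lam ^ s) * Np s (T k c F2 w) := by
    intro w
    obtain ⟨a1, a2, a3, a4⟩ := hw w
    have hh2 := T_herm k c hF2h w
    have u1 := count_le hs hl a1 a2 a3 hh2 a4 (hV w) (hT' w)
    have u2 := count_le (q := q w) (G := - G w) (H1 := - T k c F1 w) (H2 := - T k c F2 w)
      hs hl a1 a2 a3.neg hh2.neg (by simp [a4]) (hV w) (η := fun i => - g w i)
      (by rw [← Sp_neg, ← hT' w]; abel)
    rw [Np_neg s hh2, neg_mul_neg] at u2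
    have u3 : (∑ i, if 2 * lam < |g w i| then (1:ℝ) else 0)
        ≤ (∑ i, if 2 * lam < g w i then (1:ℝ) else 0)
          + ∑ i, if 2 * lam < - g w i then (1:ℝ) else 0 := by
      rw [← Finset.sum_add_distrib]
      refine Finset.sum_le_sum fun i _ => ?_
      by_cases h : 2 * lam < |g w i|
      · rw [if_pos h]
        rcases lt_abs.mp h with h | h
        · rw [if_pos h]; split_ifs <;> norm_num
        · rw [if_pos h]; split_ifs <;> norm_num
      · rw [if_neg h]; split_ifs <;> norm_num
    have : (2 / lam ^ 2) * tr (G w * G w) = 2 * (tr (G w * G w) / lam ^ 2) := by ring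
    rw [this]
    have : (2 / lam ^ s) * Np s (T k c F2 w) = 2 * (Np s (T k c F2 w) / lam ^ s) := by ring
    rw [this]
    linarith
  refine (E_mono k hpt).trans ?_
  have es : ∀ (a : ℝ) (X : Om k → ℝ), E k (fun w => a * X w) = a * E k X := fun a X => E_smul k a X
  rw [E_add, E_add, es, es, es]
  have t1 : E k (fun w => ∑ i, if lam < f w i then f w i else 0) = E k (fun w => tr (F1 w)) := by
    congr 1; funext w; simp only [hF1]; rw [tr_Sp (hW w)]
  have t2 : E k (fun w => ∑ i, if lam < f w i then 0 else f w i ^ s) = E k (fun w => Np s (F2 w)) := by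
    congr 1; funext w; simp only [hF2]; rw [Np_Sp s (hW w)]
    refine Finset.sum_congr rfl fun i _ => ?_
    split_ifs
    · simp [show s ≠ 0 by linarith]
    · rw [abs_of_nonneg (hf w i)]
  rw [t1, t2]
  have hMM := hM F2 hF2h
  have b1 : 2 * E k (fun w => tr (1 - q w)) ≤ 2 / lam * E k (fun w => tr (F1 w)) := by
    rw [div_mul_eq_mul_div, le_div_iff₀ hl]; linarith
  have b2 : 2 / lam ^ 2 * E k (fun w => tr (G w * G w)) ≤ 4 / lam * E k (fun w => tr (F1 w)) := by
    calc 2 / lam ^ 2 * E k (fun w => tr (G w * G w))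
        ≤ 2 / lam ^ 2 * (2 * lam * E k (fun w => tr (F1 w))) := by gcongr
      _ = _ := by field_simp; ring
  have b3 : 2 / lam ^ s * E k (fun w => Np s (T k c F2 w))
      ≤ 2 * M / lam ^ s * E k (fun w => Np s (F2 w)) := by
    calc 2 / lam ^ s * E k (fun w => Np s (T k c F2 w))
        ≤ 2 / lam ^ s * (M * E k (fun w => Np s (F2 w))) := by gcongr
      _ = _ := by ring
  have : 6 / lam * E k (fun w => tr (F1 w)) = 2 / lam * E k (fun w => tr (F1 w))
    + 4 / lam * E k (fun w => tr (F1 w)) := by ring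
  rw [this]
  linarith

end LS


namespace LS
set_option linter.unusedSectionVars false
set_option linter.unusedDecidableInType false
open scoped ComplexOrder
variable {n : Type*} [Fintype n] [DecidableEq n]

open MeasureTheory in
def HI (h : ℝ → ℝ) (v : ℝ) : Prop :=
  IntegrableOn h (Set.Ioi 0) ∧ ∫ x in Set.Ioi 0, h x = v

lemma HI.cmul {h : ℝ → ℝ} {v : ℝ} (H : HI h v) (c : ℝ) : HI (fun x => c * h x) (c * v) :=
  ⟨H.1.const_mul c, by rw [MeasureTheory.integral_const_mul, H.2]⟩

lemma HI.add {h h' : ℝ → ℝ} {v v' : ℝ} (H : HI h v) (H' : HI h' v') :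
    HI (fun x => h x + h' x) (v + v') :=
  ⟨MeasureTheory.Integrable.add H.1 H'.1, by
    rw [MeasureTheory.integral_add H.1 H'.1, H.2, H'.2]⟩

lemma HI_sum {ι : Type*} [Fintype ι] {h : ι → ℝ → ℝ} {v : ι → ℝ} (H : ∀ i, HI (h i) (v i)) :
    HI (fun x => ∑ i, h i x) (∑ i, v i) :=
  ⟨MeasureTheory.integrable_finsetSum _ fun i _ => (H i).1, by
    rw [MeasureTheory.integral_finsetSum _ fun i _ => (H i).1]
    exact Finset.sum_congr rfl fun i _ => (H i).2⟩

lemma HI_E (k : ℕ) {h : Om k → ℝ → ℝ} {v : Om k → ℝ} (H : ∀ w, HI (h w) (v w)) :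
    HI (fun x => E k (fun w => h w x)) (E k v) := by
  induction k with
  | zero => exact H ()
  | succ k ih =>
    simp only [E_succ]
    have h1 := ih (fun w => H (true, w))
    have h2 := ih (fun w => H (false, w))
    exact (h1.add h2).cmul _

lemma HI_le {h h' : ℝ → ℝ} {v v' : ℝ} (H : HI h v) (H' : HI h' v')
    (hle : ∀ x, 0 < x → h x ≤ h' x) : v ≤ v' := by
  rw [← H.2, ← H'.2]
  exact MeasureTheory.setIntegral_mono_on H.1 H'.1 measurableSet_Ioi fun x hx => hle x hx

lemma HI_lt {r b : ℝ} (hr : -1 < r) (hb : 0 ≤ b) :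
    HI (fun x => if x < b then x ^ r else 0) (b ^ (r + 1) / (r + 1)) := by
  have e : (fun x : ℝ => if x < b then x ^ r else 0) = (Set.Iio b).indicator (fun x => x ^ r) := by
    funext x; simp [Set.indicator_apply]
  have hi : IntervalIntegrable (fun x : ℝ => x ^ r) MeasureTheory.volume 0 b :=
    intervalIntegral.intervalIntegrable_rpow' hr
  rw [intervalIntegrable_iff_integrableOn_Ioo_of_le hb] at hi
  have e2 : Set.Iio b ∩ Set.Ioi (0:ℝ) = Set.Ioo 0 b := by ext x; simp [and_comm]
  have e3 : Set.Ioi (0:ℝ) ∩ Set.Iio b = Set.Ioo 0 b := by ext x; simp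
  rw [e]
  constructor
  · rw [MeasureTheory.IntegrableOn, MeasureTheory.integrable_indicator_iff measurableSet_Iio]
    rw [MeasureTheory.IntegrableOn, MeasureTheory.Measure.restrict_restrict measurableSet_Iio, e2]
    exact hi
  · rw [MeasureTheory.setIntegral_indicator measurableSet_Iio, e3,
      ← MeasureTheory.integral_Ioc_eq_integral_Ioo, ← intervalIntegral.integral_of_le hb,
      integral_rpow (Or.inl hr), Real.zero_rpow (by linarith), sub_zero]

lemma HI_ge {r b : ℝ} (hr : r < -1) (hb : 0 < b) :
    HI (fun x => if x < b then 0 else x ^ r) (b ^ (r + 1) / (-(r + 1))) := by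
  have e : (fun x : ℝ => if x < b then 0 else x ^ r) = (Set.Ici b).indicator (fun x => x ^ r) := by
    funext x; simp only [Set.indicator_apply, Set.mem_Ici]
    split_ifs <;> first | rfl | (exfalso; linarith)
  have hi : MeasureTheory.IntegrableOn (fun x : ℝ => x ^ r) (Set.Ici b) := by
    rw [integrableOn_Ici_iff_integrableOn_Ioi]
    exact integrableOn_Ioi_rpow_of_lt hr hb
  have e2 : Set.Ici b ∩ Set.Ioi (0:ℝ) = Set.Ici b := by
    ext x; simp only [Set.mem_inter_iff, Set.mem_Ici, Set.mem_Ioi]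
    exact ⟨fun h => h.1, fun h => ⟨h, by linarith⟩⟩
  rw [e]
  constructor
  · rw [MeasureTheory.IntegrableOn, MeasureTheory.integrable_indicator_iff measurableSet_Ici]
    rw [MeasureTheory.IntegrableOn, MeasureTheory.Measure.restrict_restrict measurableSet_Ici, e2]
    exact hi
  · rw [MeasureTheory.setIntegral_indicator measurableSet_Ici, Set.inter_comm, e2,
      MeasureTheory.integral_Ici_eq_integral_Ioi, integral_Ioi_rpow_of_lt hr hb]
    rw [div_neg, neg_div]

lemma strong_psd {s p M : ℝ} (hs : 2 ≤ s) (hp : 1 < p) (hps : p < s) (k : ℕ) (c : ℕ → ℝ)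
    (hc : ∀ i, 0 ≤ c i ∧ c i ≤ 1)
    (hM : ∀ F : Om k → Matrix n n ℂ, (∀ w, (F w).IsHermitian) →
      E k (fun w => Np s (T k c F w)) ≤ M * E k (fun w => Np s (F w)))
    (F : Om k → Matrix n n ℂ) (hF : ∀ w, (F w).PosSemidef) :
    E k (fun w => Np p (T k c F w)) ≤
      2 ^ p * p * (6 / (p - 1) + 2 * M / (s - p)) * E k (fun w => Np p (F w)) := by
  choose W f hW hWf using fun w => exists_Sp' (hF w).1
  have hf : ∀ w i, 0 ≤ f w i := fun w => Sp_psd_rev (hW w) (by rw [← hWf w]; exact hF w)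
  have hFe : F = fun w => Sp (W w) (f w) := funext hWf
  choose V g hV hVg using fun w => exists_Sp' (T_herm k c (fun w => (hF w).1) w)
  have hT : ∀ w, T k c (fun w => Sp (W w) (f w)) w = Sp (V w) (g w) := by
    intro w; rw [← hFe]; exact hVg w
  have L : HI (fun x => E k (fun w => ∑ i, if x < |g w i| / 2 then x ^ (p - 1) else 0))
      (E k (fun w => ∑ i, (|g w i| / 2) ^ (p - 1 + 1) / (p - 1 + 1))) :=
    HI_E k fun w => HI_sum fun i => HI_lt (by linarith) (by positivity)
  have R1 : HI (fun x => E k (fun w => ∑ i, f w i * if x < f w i then x ^ (p - 2) else 0))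
      (E k (fun w => ∑ i, f w i * ((f w i) ^ (p - 2 + 1) / (p - 2 + 1)))) :=
    HI_E k fun w => HI_sum fun i => (HI_lt (by linarith) (hf w i)).cmul _
  have R2 : HI (fun x => E k (fun w => ∑ i, f w i ^ s * if x < f w i then 0 else x ^ (p - 1 - s)))
      (E k (fun w => ∑ i, f w i ^ s * ((f w i) ^ (p - 1 - s + 1) / (-(p - 1 - s + 1))))) := by
    refine HI_E k fun w => HI_sum fun i => ?_
    rcases (hf w i).eq_or_lt with h | h
    · rw [← h, Real.zero_rpow (by linarith)]
      simp only [zero_mul]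
      exact ⟨MeasureTheory.integrableOn_zero, by simp⟩
    · exact (HI_ge (by linarith) h).cmul _
  have key := HI_le L ((R1.cmul 6).add (R2.cmul (2 * M))) (by
    intro x hx
    have d := dist_le hs hx k c hc hM W V f g hW hV hf hT
    have d2 := mul_le_mul_of_nonneg_left d (Real.rpow_nonneg hx.le (p - 1))
    rw [mul_add] at d2
    refine le_trans (le_of_eq ?_) (d2.trans (le_of_eq ?_))
    · rw [← smul_eq_mul (x ^ (p - 1)), ← E_smul]
      congr 1; funext w
      rw [smul_eq_mul, Finset.mul_sum]
      refine Finset.sum_congr rfl fun i _ => ?_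
      by_cases h : 2 * x < |g w i|
      · rw [if_pos h, if_pos (by linarith), mul_one]
      · rw [if_neg h, if_neg (by intro h'; apply h; linarith), mul_zero]
    · have a1 : x ^ (p - 1) * (6 / x * E k (fun w => ∑ i, if x < f w i then f w i else 0))
          = 6 * (x ^ (p - 2) * E k (fun w => ∑ i, if x < f w i then f w i else 0)) := by
        have : x ^ (p - 2) = x ^ (p - 1) / x := by
          rw [← Real.rpow_sub_one hx.ne']; congr 1; ring
        rw [this]; ring
      have a2 : x ^ (p - 1) * (2 * M / x ^ s * E k (fun w => ∑ i, if x < f w i then 0 else f w i ^ s))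
          = 2 * M * (x ^ (p - 1 - s) * E k (fun w => ∑ i, if x < f w i then 0 else f w i ^ s)) := by
        rw [Real.rpow_sub hx (p - 1) s]; ring
      rw [a1, a2]
      congr 2
      · rw [← smul_eq_mul (x ^ (p - 2)), ← E_smul]
        congr 1; funext w
        rw [smul_eq_mul, Finset.mul_sum]
        refine Finset.sum_congr rfl fun i _ => ?_
        split_ifs <;> ring
      · rw [← smul_eq_mul (x ^ (p - 1 - s)), ← E_smul]
        congr 1; funext w
        rw [smul_eq_mul, Finset.mul_sum]
        refine Finset.sum_congr rfl fun i _ => ?_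
        split_ifs <;> ring)
  have eL : E k (fun w => ∑ i, (|g w i| / 2) ^ (p - 1 + 1) / (p - 1 + 1))
      = (1 / (2 ^ p * p)) * E k (fun w => Np p (T k c F w)) := by
    rw [← smul_eq_mul, ← E_smul]
    congr 1; funext w
    rw [hVg w, Np_Sp p (hV w), smul_eq_mul, Finset.mul_sum]
    refine Finset.sum_congr rfl fun i _ => ?_
    rw [sub_add_cancel, Real.div_rpow (abs_nonneg _) (by norm_num)]
    ring
  have e1 : E k (fun w => ∑ i, f w i * ((f w i) ^ (p - 2 + 1) / (p - 2 + 1)))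
      = (1 / (p - 1)) * E k (fun w => Np p (F w)) := by
    rw [← smul_eq_mul, ← E_smul]
    congr 1; funext w
    rw [hWf w, Np_Sp p (hW w), smul_eq_mul, Finset.mul_sum]
    refine Finset.sum_congr rfl fun i _ => ?_
    rw [abs_of_nonneg (hf w i)]
    rcases (hf w i).eq_or_lt with h | h
    · rw [← h, Real.zero_rpow (by linarith : p ≠ 0)]; ring
    · have : f w i ^ p = f w i * f w i ^ (p - 2 + 1) := by
        rw [show p - 2 + 1 = p - 1 by ring, Real.rpow_sub_one h.ne']; field_simp
      rw [this, show p - 2 + 1 = p - 1 by ring]; ring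
  have e2 : E k (fun w => ∑ i, f w i ^ s * ((f w i) ^ (p - 1 - s + 1) / (-(p - 1 - s + 1))))
      = (1 / (s - p)) * E k (fun w => Np p (F w)) := by
    rw [← smul_eq_mul, ← E_smul]
    congr 1; funext w
    rw [hWf w, Np_Sp p (hW w), smul_eq_mul, Finset.mul_sum]
    refine Finset.sum_congr rfl fun i _ => ?_
    rw [abs_of_nonneg (hf w i)]
    rcases (hf w i).eq_or_lt with h | h
    · rw [← h, Real.zero_rpow (by linarith : p ≠ 0), Real.zero_rpow (by linarith : s ≠ 0)]; ring
    · have : f w i ^ p = f w i ^ s * f w i ^ (p - 1 - s + 1) := by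
        rw [← Real.rpow_add h]; congr 1; ring
      rw [this, show -(p - 1 - s + 1) = s - p by ring]; ring
  rw [eL, e1, e2] at key
  have h2p : 0 < (2:ℝ) ^ p * p := by have := Real.rpow_pos_of_pos (show (0:ℝ) < 2 by norm_num) p; positivity
  rw [one_div, inv_mul_le_iff₀ h2p] at key
  refine key.trans (le_of_eq ?_)
  ring

end LS


namespace LS
set_option linter.unusedSectionVars false
set_option linter.unusedDecidableInType false
open scoped ComplexOrder
variable {n : Type*} [Fintype n] [DecidableEq n]

def Bil (n : Type*) [Fintype n] [DecidableEq n] (k : ℕ) (c : ℕ → ℝ) (p q K : ℝ) : Prop :=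
  ∀ F B : Om k → Matrix n n ℂ, (∀ w, (F w).IsHermitian) → (∀ w, (B w).IsHermitian) →
    E k (fun w => tr (T k c F w * B w)) ≤
      K * (E k (fun w => Np p (F w)) / p + E k (fun w => Np q (B w)) / q)

lemma E_nonneg (k : ℕ) {F : Om k → ℝ} (h : ∀ w, 0 ≤ F w) : 0 ≤ E k F := by
  have := E_mono k h; rwa [E_const] at this

lemma E_mul (k : ℕ) (c : ℝ) (F : Om k → ℝ) : E k (fun w => c * F w) = c * E k F := E_smul k c F

lemma T_smul (k : ℕ) (c : ℕ → ℝ) (a : ℝ) (F : Om k → Matrix n n ℂ) (w : Om k) :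
    T k c (fun w => a • F w) w = a • T k c F w := by
  have := T_map (a • (LinearMap.id : Matrix n n ℂ →ₗ[ℝ] Matrix n n ℂ)) k c F w
  simpa using this

lemma bil_psd_aux {p q M : ℝ} (hpq : p.HolderConjugate q) (hM1 : 1 ≤ M) (k : ℕ) (c : ℕ → ℝ)
    (h : ∀ F : Om k → Matrix n n ℂ, (∀ w, (F w).PosSemidef) →
      E k (fun w => Np p (T k c F w)) ≤ M * E k (fun w => Np p (F w)))
    (F B : Om k → Matrix n n ℂ) (hF : ∀ w, (F w).PosSemidef) (hB : ∀ w, (B w).IsHermitian) :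
    E k (fun w => tr (T k c F w * B w)) ≤
      M * (E k (fun w => Np p (F w)) / p + E k (fun w => Np q (B w)) / q) := by
  have hp := hpq.pos
  have hq := hpq.symm.pos
  have hM0 : 0 < M := by linarith
  have hTh := T_herm k c (fun w => (hF w).1)
  have h1 : ∀ w, tr (T k c F w * B w) ≤
      (M⁻¹ / p) * Np p (T k c F w) * M + (M / q) * Np q (B w) := by
    intro w
    have y := tr_young hpq (herm_smul M⁻¹ (hTh w)) (hB w)
    rw [tr_smul_mul, Np_smul p _ (hTh w), abs_of_pos (by positivity),
      inv_mul_le_iff₀ hM0] at y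
    have hpw : M⁻¹ ^ p ≤ M⁻¹ := by
      have := Real.rpow_le_rpow_of_exponent_ge (x := M⁻¹) (by positivity) (inv_le_one_of_one_le₀ hM1) hpq.lt.le
      simpa using this
    have hN := Np_nonneg p (T k c F w)
    calc _ ≤ _ := y
      _ ≤ M * (M⁻¹ * Np p (T k c F w) / p + Np q (B w) / q) := by gcongr
      _ = _ := by ring
  have h2 := E_mono k h1
  rw [E_add] at h2
  have e1 : E k (fun w => (M⁻¹ / p) * Np p (T k c F w) * M) = p⁻¹ * E k (fun w => Np p (T k c F w)) := by
    rw [← E_mul]; congr 1; funext w; field_simp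
  rw [e1, E_mul] at h2
  have h3 := mul_le_mul_of_nonneg_left (h F hF) (inv_nonneg.2 hp.le)
  calc _ ≤ _ := h2
    _ ≤ p⁻¹ * (M * E k (fun w => Np p (F w))) + M / q * E k (fun w => Np q (B w)) := by gcongr
    _ = _ := by ring

lemma bil_of_psd {p q M : ℝ} (hpq : p.HolderConjugate q) (hM1 : 1 ≤ M) (k : ℕ) (c : ℕ → ℝ)
    (h : ∀ F : Om k → Matrix n n ℂ, (∀ w, (F w).PosSemidef) →
      E k (fun w => Np p (T k c F w)) ≤ M * E k (fun w => Np p (F w))) :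
    Bil n k c p q (2 * M) := by
  intro F B hF hB
  choose P Q hP hQ hPQ hN using fun w => exists_pos_neg p hpq.pos (hF w)
  have a1 := bil_psd_aux hpq hM1 k c h P B hP hB
  have a2 := bil_psd_aux hpq hM1 k c h Q (fun w => - B w) hQ (fun w => (hB w).neg)
  have hFe : F = fun w => P w - Q w := funext hPQ
  have e1 : E k (fun w => tr (T k c F w * B w)) = E k (fun w => tr (T k c P w * B w))
      + E k (fun w => tr (T k c Q w * (- B w))) := by
    rw [← E_add]; congr 1; funext w
    rw [hFe, T_sub, Matrix.sub_mul, Matrix.mul_neg, tr_sub, tr_neg]; ring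
  have e2 : E k (fun w => Np q (- B w)) = E k (fun w => Np q (B w)) := by
    congr 1; funext w; exact Np_neg q (hB w)
  have e3 : E k (fun w => Np p (F w)) = E k (fun w => Np p (P w)) + E k (fun w => Np p (Q w)) := by
    rw [← E_add]; congr 1; funext w; exact (hN w).symm
  rw [e1, e3]
  rw [e2] at a2
  have hp := hpq.pos
  have n1 : 0 ≤ E k (fun w => Np p (P w)) := E_nonneg k fun w => Np_nonneg p _
  have n2 : 0 ≤ E k (fun w => Np p (Q w)) := E_nonneg k fun w => Np_nonneg p _
  have n3 : 0 ≤ M * (E k (fun w => Np p (P w)) / p + E k (fun w => Np p (Q w)) / p) := by positivity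
  have : 2 * M * ((E k (fun w => Np p (P w)) + E k (fun w => Np p (Q w))) / p
      + E k (fun w => Np q (B w)) / q) = 
      M * (E k (fun w => Np p (P w)) / p + E k (fun w => Np q (B w)) / q)
      + M * (E k (fun w => Np p (Q w)) / p + E k (fun w => Np q (B w)) / q)
      + M * (E k (fun w => Np p (P w)) / p + E k (fun w => Np p (Q w)) / p) := by ring
  rw [this]; linarith

lemma bil_symm {p q K : ℝ} {k : ℕ} {c : ℕ → ℝ} (h : Bil n k c p q K) : Bil n k c q p K := by
  intro F B hF hB
  rw [T_selfadj, add_comm]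
  have := h B F hB hF
  refine le_trans (le_of_eq ?_) this
  congr 1; funext w; exact tr_comm _ _

lemma strong_of_bil {p q K : ℝ} (hpq : p.HolderConjugate q) (hK : 0 < K) {k : ℕ} {c : ℕ → ℝ}
    (h : Bil n k c p q K) (F : Om k → Matrix n n ℂ) (hF : ∀ w, (F w).IsHermitian) :
    E k (fun w => Np p (T k c F w)) ≤ K ^ p * E k (fun w => Np p (F w)) := by
  have hTh := T_herm k c hF
  choose B hB h1 h2 using fun w => exists_dual hpq (hTh w)
  have := h (fun w => K • F w) B (fun w => herm_smul K (hF w)) hB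
  have e1 : E k (fun w => tr (T k c (fun w => K • F w) w * B w))
      = K * E k (fun w => Np p (T k c F w)) := by
    rw [← E_mul]; congr 1; funext w; rw [T_smul, tr_smul_mul, h1]
  have e2 : E k (fun w => Np p (K • F w)) = K ^ p * E k (fun w => Np p (F w)) := by
    rw [← E_mul]; congr 1; funext w; rw [Np_smul p K (hF w), abs_of_pos hK]
  have e3 : E k (fun w => Np q (B w)) = E k (fun w => Np p (T k c F w)) := by
    congr 1; funext w; exact h2 w
  rw [e1, e2, e3] at this
  have this := le_of_mul_le_mul_left this hK
  have hp := hpq.pos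
  set X := E k (fun w => Np p (T k c F w))
  have hx : X = X / p + X / q := by
    have := hpq.inv_add_inv_eq_one
    calc X = X * (p⁻¹ + q⁻¹) := by rw [this, mul_one]
      _ = _ := by ring
  have h4 : X / p ≤ K ^ p * E k (fun w => Np p (F w)) / p := by linarith
  exact (div_le_div_iff_of_pos_right hp).1 h4

lemma strong_two (k : ℕ) (c : ℕ → ℝ) (hc : ∀ i, 0 ≤ c i ∧ c i ≤ 1)
    (F : Om k → Matrix n n ℂ) (hF : ∀ w, (F w).IsHermitian) :
    E k (fun w => Np 2 (T k c F w)) ≤ 1 * E k (fun w => Np 2 (F w)) := by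
  have e1 : E k (fun w => Np 2 (T k c F w)) = E k (fun w => tr (T k c F w * T k c F w)) := by
    congr 1; funext w; exact Np_two (T_herm k c hF w)
  have e2 : E k (fun w => Np 2 (F w)) = E k (fun w => tr (F w * F w)) := by
    congr 1; funext w; exact Np_two (hF w)
  rw [e1, e2]
  have := T_L2 k c hc hF
  have := tr_sq_nonneg (E_herm k hF)
  linarith

lemma two_rpow_mul_le {p : ℝ} (hp : 0 < p) (hp2 : p ≤ 2) : (2:ℝ) ^ p * p ≤ 8 := by
  have : (2:ℝ) ^ p ≤ 2 ^ (2:ℝ) := Real.rpow_le_rpow_of_exponent_le (by norm_num) hp2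
  have h4 : (2:ℝ) ^ (2:ℝ) = 4 := by norm_num
  nlinarith

lemma strong_four (k : ℕ) (c : ℕ → ℝ) (hc : ∀ i, 0 ≤ c i ∧ c i ≤ 1)
    (F : Om k → Matrix n n ℂ) (hF : ∀ w, (F w).IsHermitian) :
    E k (fun w => Np 4 (T k c F w)) ≤ 336 ^ (4:ℝ) * E k (fun w => Np 4 (F w)) := by
  have hpq : (4 / 3 : ℝ).HolderConjugate 4 := by
    rw [Real.holderConjugate_iff]; norm_num
  have b : Bil n k c (4/3) 4 (2 * 168) := by
    apply bil_of_psd hpq (by norm_num)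
    intro G hG
    refine (strong_psd (s := 2) le_rfl (by norm_num) (by norm_num) k c hc
      (strong_two k c hc) G hG).trans ?_
    have n1 : 0 ≤ E k (fun w => Np (4/3) (G w)) := E_nonneg k fun w => Np_nonneg _ _
    have := two_rpow_mul_le (p := 4/3) (by norm_num) (by norm_num)
    apply mul_le_mul_of_nonneg_right _ n1
    calc _ ≤ 8 * (6 / (4/3 - 1) + 2 * 1 / (2 - 4/3) : ℝ) := by
          apply mul_le_mul_of_nonneg_right this; norm_num
      _ ≤ _ := by norm_num
  rw [show (2 * 168 : ℝ) = 336 by norm_num] at b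
  exact strong_of_bil hpq.symm (by norm_num) (bil_symm b) F hF

noncomputable def C1 : ℝ := 2 * (8 * (6 + 336 ^ (4:ℝ)))

lemma C1_pos : 1 ≤ C1 := by
  have : (0:ℝ) < 336 ^ (4:ℝ) := by positivity
  unfold C1; linarith

lemma bil_le_two {p q : ℝ} (hpq : p.HolderConjugate q) (hp2 : p ≤ 2) (k : ℕ) (c : ℕ → ℝ)
    (hc : ∀ i, 0 ≤ c i ∧ c i ≤ 1) : Bil n k c p q (C1 * (p * q)) := by
  have h1 := hpq.lt
  have hA : (0:ℝ) < 336 ^ (4:ℝ) := by positivity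
  set A : ℝ := 336 ^ (4:ℝ) with hAdef
  have hpos : 0 < p - 1 := by linarith
  have hpqe : p * q = p ^ 2 / (p - 1) := by
    rw [hpq.conjugate_eq]; ring
  have hge : 1 / (p - 1) ≤ p * q := by
    rw [hpqe]; gcongr; nlinarith
  have hge1 : 1 ≤ 1 / (p - 1) := by rw [le_div_iff₀ hpos]; linarith
  have : C1 * (p * q) = 2 * (8 * (6 + A) * (p * q)) := by unfold C1; rw [← hAdef]; ring
  rw [this]
  apply bil_of_psd hpq
  · nlinarith
  intro G hG
  refine (strong_psd (s := 4) (by norm_num) h1 (by linarith) k c hc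
      (strong_four k c hc) G hG).trans ?_
  have n1 : 0 ≤ E k (fun w => Np p (G w)) := E_nonneg k fun w => Np_nonneg _ _
  apply mul_le_mul_of_nonneg_right _ n1
  rw [← hAdef]
  have t1 : 2 * A / (4 - p) ≤ A * (p * q) := by
    rw [div_le_iff₀ (by linarith)]
    have : 2 ≤ (p * q) * (4 - p) := by nlinarith
    nlinarith
  have t2 : 6 / (p - 1) ≤ 6 * (p * q) := by
    have := mul_le_mul_of_nonneg_left hge (show (0:ℝ) ≤ 6 by norm_num)
    rwa [mul_one_div] at this
  have t3 := two_rpow_mul_le (by linarith) hp2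
  have t4 : 0 ≤ 6 / (p - 1) + 2 * A / (4 - p) := by
    have : 0 < 4 - p := by linarith
    positivity
  calc _ ≤ 8 * (6 / (p - 1) + 2 * A / (4 - p)) := mul_le_mul_of_nonneg_right t3 t4
    _ ≤ 8 * (6 * (p * q) + A * (p * q)) := by linarith
    _ = _ := by ring

theorem bil_main {p q : ℝ} (hpq : p.HolderConjugate q) (k : ℕ) (c : ℕ → ℝ)
    (hc : ∀ i, 0 ≤ c i ∧ c i ≤ 1) : Bil n k c p q (C1 * (p * q)) := by
  rcases le_total p 2 with h | h
  · exact bil_le_two hpq h k c hc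
  · rw [mul_comm p q]
    apply bil_symm
    apply bil_le_two hpq.symm _ k c hc
    rw [hpq.conjugate_eq, div_le_iff₀ (by linarith)]; linarith

end LS


namespace LS
set_option linter.unusedSectionVars false
set_option linter.unusedDecidableInType false
open scoped ComplexOrder
variable {n : Type*} [Fintype n] [DecidableEq n]

noncomputable def Sm (m : n → n → ℝ) (A : Matrix n n ℂ) : Matrix n n ℂ :=
  Matrix.of fun j k => (m j k : ℂ) * A j k

def Sy (n : Type*) [Fintype n] [DecidableEq n] (p q K : ℝ) (m : n → n → ℝ) : Prop :=
  ∀ A B : Matrix n n ℂ, A.IsHermitian → B.IsHermitian →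
    tr (Sm m A * B) ≤ K * (Np p A / p + Np q B / q)

lemma tr_Sm (m : n → n → ℝ) (A B : Matrix n n ℂ) :
    tr (Sm m A * B) = ∑ j, ∑ k, m j k * (A j k * B k j).re := by
  simp only [tr, Matrix.trace, Matrix.diag, Matrix.mul_apply, Sm, Matrix.of_apply, Complex.re_sum]
  refine Finset.sum_congr rfl fun j _ => Finset.sum_congr rfl fun k _ => ?_
  rw [mul_assoc, Complex.re_ofReal_mul]

lemma Sy_lim {ι : Type*} {l : Filter ι} [l.NeBot] {p q K : ℝ} {m : ι → n → n → ℝ} {m0 : n → n → ℝ}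
    (h : ∀ i, Sy n p q K (m i)) (hl : ∀ j k, Filter.Tendsto (fun i => m i j k) l (nhds (m0 j k))) :
    Sy n p q K m0 := by
  intro A B hA hB
  have : Filter.Tendsto (fun i => tr (Sm (m i) A * B)) l (nhds (tr (Sm m0 A * B))) := by
    simp only [tr_Sm]
    exact tendsto_finsetSum _ fun j _ => tendsto_finsetSum _ fun k _ => (hl j k).mul_const _
  exact le_of_tendsto this (Filter.Eventually.of_forall fun i => h i A B hA hB)

noncomputable def ev : (k : ℕ) → (ℕ → n → ℝ) → Om k → n → ℂ
  | 0, _, _ => fun _ => 1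
  | k + 1, x, (b, w) => fun j =>
      Complex.exp (((if b then 1 else -1 : ℝ) * x 0 j : ℝ) * Complex.I) * ev k (fun i => x (i + 1)) w j

noncomputable def uv : (k : ℕ) → (ℕ → ℝ) → Om k → ℂ
  | 0, _, _ => 1
  | k + 1, t, (b, w) =>
      Complex.exp (((if b then 1 else -1 : ℝ) * t 0 : ℝ) * Complex.I) * uv k (fun i => t (i + 1)) w

noncomputable def pis : (k : ℕ) → (ℕ → ℝ) → ℝ
  | 0, _ => 1
  | k + 1, t => Real.cos (t 0) * pis k (fun i => t (i + 1))

noncomputable def ms : (k : ℕ) → (ℕ → ℝ) → (ℕ → ℝ) → ℝ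
  | 0, _, _ => 0
  | k + 1, c, t => c 0 * Real.sin (t 0) ^ 2 * pis k (fun i => t (i + 1)) ^ 2
      + ms k (fun i => c (i + 1)) (fun i => t (i + 1))

lemma exp_conj_I (a : ℝ) : (starRingEnd ℂ) (Complex.exp ((a : ℂ) * Complex.I))
    = Complex.exp (((-a : ℝ) : ℂ) * Complex.I) := by
  rw [← Complex.exp_conj]; simp

lemma ev_uv (k : ℕ) (x : ℕ → n → ℝ) (w : Om k) (j l : n) :
    ev k x w j * (starRingEnd ℂ) (ev k x w l) = uv k (fun i => x i j - x i l) w := by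
  induction k generalizing x with
  | zero => simp [ev, uv]
  | succ k ih =>
    obtain ⟨b, w⟩ := w
    simp only [ev, uv]
    rw [← ih (fun i => x (i + 1)), map_mul, exp_conj_I]
    have : Complex.exp (((if b then 1 else -1 : ℝ) * (x 0 j - x 0 l) : ℝ) * Complex.I)
      = Complex.exp (((if b then 1 else -1 : ℝ) * x 0 j : ℝ) * Complex.I) *
        Complex.exp (((-((if b then 1 else -1 : ℝ) * x 0 l) : ℝ) : ℂ) * Complex.I) := by
      rw [← Complex.exp_add]; congr 1; push_cast; ring
    rw [this]; ring

lemma uv_norm (k : ℕ) (t : ℕ → ℝ) (w : Om k) : (starRingEnd ℂ) (uv k t w) * uv k t w = 1 := by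
  induction k generalizing t with
  | zero => simp [uv]
  | succ k ih =>
    obtain ⟨b, w⟩ := w
    simp only [uv]
    rw [map_mul, exp_conj_I]
    have h := ih (fun i => t (i + 1)) w
    have e : Complex.exp (((-((if b then 1 else -1 : ℝ) * t 0) : ℝ) : ℂ) * Complex.I) *
        Complex.exp (((if b then 1 else -1 : ℝ) * t 0 : ℝ) * Complex.I) = 1 := by
      rw [← Complex.exp_add, ← Complex.exp_zero]; congr 1; push_cast; ring
    calc _ = (Complex.exp (((-((if b then 1 else -1 : ℝ) * t 0) : ℝ) : ℂ) * Complex.I) *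
        Complex.exp (((if b then 1 else -1 : ℝ) * t 0 : ℝ) * Complex.I)) *
          ((starRingEnd ℂ) (uv k (fun i => t (i + 1)) w) * uv k (fun i => t (i + 1)) w) := by ring
      _ = 1 := by rw [e, h, one_mul]

lemma ev_norm (k : ℕ) (x : ℕ → n → ℝ) (w : Om k) (j : n) :
    (starRingEnd ℂ) (ev k x w j) * ev k x w j = 1 := by
  rw [mul_comm, ev_uv]
  have : ∀ (k : ℕ) (w : Om k), uv k (fun _ => 0) w = 1 := by
    intro k; induction k with
    | zero => intro w; rfl
    | succ k ih => rintro ⟨b, w⟩; simp [uv, ih]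
  simpa using this k w

lemma E_cmul (k : ℕ) (a : ℂ) (F : Om k → ℂ) : E k (fun w => a * F w) = a * E k F :=
  E_map (LinearMap.mulLeft ℝ a) k F

lemma T_cmul (k : ℕ) (c : ℕ → ℝ) (a : ℂ) (F : Om k → ℂ) (w : Om k) :
    T k c (fun w => a * F w) w = a * T k c F w :=
  T_map (LinearMap.mulLeft ℝ a) k c F w

lemma cexp_pm (t : ℝ) : Complex.exp ((((1:ℝ) * t : ℝ) : ℂ) * Complex.I) = Real.cos t + Real.sin t * Complex.I
    ∧ Complex.exp ((((-1:ℝ) * t : ℝ) : ℂ) * Complex.I) = Real.cos t - Real.sin t * Complex.I := by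
  constructor
  · rw [one_mul, Complex.exp_mul_I]; push_cast; rfl
  · rw [Complex.exp_mul_I]; push_cast; simp; ring

lemma E_uv (k : ℕ) (t : ℕ → ℝ) : E k (uv k t) = pis k t := by
  induction k generalizing t with
  | zero => simp [E, uv, pis]
  | succ k ih =>
    rw [E_succ]
    simp only [uv, if_true, E_cmul]
    rw [ih, pis]
    have h := cexp_pm (t 0)
    simp only [Bool.false_eq_true, if_false]
    rw [h.1, h.2, Complex.real_smul]
    push_cast; ring

lemma E_ms (k : ℕ) (c t : ℕ → ℝ) :
    E k (fun w => (starRingEnd ℂ) (uv k t w) * T k c (uv k t) w) = ms k c t := by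
  induction k generalizing t c with
  | zero => simp [E, T, uv, ms]
  | succ k ih =>
    have key : ∀ (b : Bool), E k (fun w => (starRingEnd ℂ) (uv (k+1) t (b, w)) * T (k+1) c (uv (k+1) t) (b, w))
        = c 0 * (1 - Complex.exp (((-((if b then 1 else -1 : ℝ) * t 0) : ℝ) : ℂ) * Complex.I)
          * Real.cos (t 0)) * pis k (fun i => t (i + 1)) ^ 2
          + ms k (fun i => c (i + 1)) (fun i => t (i + 1)) := by
      intro b
      set z := Complex.exp (((if b then 1 else -1 : ℝ) * t 0 : ℝ) * Complex.I) with hz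
      set z' := Complex.exp (((-((if b then 1 else -1 : ℝ) * t 0) : ℝ) : ℂ) * Complex.I) with hz'
      have hzz : z' * z = 1 := by
        rw [hz, hz', ← Complex.exp_add, ← Complex.exp_zero]; congr 1; push_cast; ring
      have e1 : ∀ w, (starRingEnd ℂ) (uv (k+1) t (b, w)) * T (k+1) c (uv (k+1) t) (b, w)
          = (z' * (c 0 * (z - Real.cos (t 0)) * pis k (fun i => t (i + 1)))) * (starRingEnd ℂ) (uv k (fun i => t (i + 1)) w)
            + (starRingEnd ℂ) (uv k (fun i => t (i + 1)) w) * T k (fun i => c (i + 1)) (uv k (fun i => t (i + 1))) w := by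
        intro w
        rw [T_succ, E_uv]
        simp only [uv, pis]
        rw [← hz, E_cmul, E_uv, T_cmul, map_mul, hz, exp_conj_I, ← hz, ← hz', Complex.real_smul]
        have : ∀ a b : ℂ, (z' * a) * (z * b) = a * b := by
          intro a b
          calc (z' * a) * (z * b) = (z' * z) * (a * b) := by ring
            _ = _ := by rw [hzz, one_mul]
        rw [mul_add, this]
        push_cast; ring
      have e2 : E k (fun w => (starRingEnd ℂ) (uv k (fun i => t (i + 1)) w)) = pis k (fun i => t (i + 1)) := by
        have := E_map (Complex.conjLIE.toLinearEquiv.toLinearMap) k (uv k (fun i => t (i + 1)))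
        rw [E_uv] at this
        simpa using this
      simp only [e1]
      rw [E_add, E_cmul, e2, ih]
      have : z' * (c 0 * (z - Real.cos (t 0)) * pis k (fun i => t (i + 1)))
        = c 0 * (z' * z - z' * Real.cos (t 0)) * pis k (fun i => t (i + 1)) := by ring
      rw [this, hzz]; ring
    rw [E_succ, key, key]
    have h := cexp_pm (t 0)
    simp only [if_true, Bool.false_eq_true, if_false]
    have h1 : (-((1:ℝ) * t 0)) = (-1) * t 0 := by ring
    have h2 : (-((-1:ℝ) * t 0)) = 1 * t 0 := by ring
    rw [h1, h2, h.1, h.2, Complex.real_smul, ms]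
    have hs : (Real.sin (t 0) : ℂ) ^ 2 = 1 - (Real.cos (t 0) : ℂ) ^ 2 := by
      have := Real.sin_sq (t 0); exact_mod_cast this
    push_cast at hs ⊢
    rw [hs]; ring

lemma E_sum (k : ℕ) {V : Type*} [AddCommGroup V] [Module ℝ V] {ι : Type*} [Fintype ι] (F : ι → Om k → V) :
    E k (fun w => ∑ i, F i w) = ∑ i, E k (F i) := by
  induction k with
  | zero => simp [E]
  | succ k ih =>
    simp only [E_succ, ih]
    rw [← Finset.sum_add_distrib, Finset.smul_sum]

lemma Sy_ms {p q : ℝ} (hpq : p.HolderConjugate q) (k : ℕ) (c : ℕ → ℝ)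
    (hc : ∀ i, 0 ≤ c i ∧ c i ≤ 1) (x : ℕ → n → ℝ) :
    Sy n p q (C1 * (p * q)) (fun j l => ms k c (fun i => x i j - x i l)) := by
  intro A B hA hB
  set D : Om k → Matrix n n ℂ := fun w => diagonal (ev k x w) with hD
  have hDD : ∀ w, (D w)ᴴ * D w = 1 := by
    intro w
    rw [hD, diagonal_conjTranspose, diagonal_mul_diagonal, ← diagonal_one]
    congr 1; funext j; exact ev_norm k x w j
  have hh : ∀ {H : Matrix n n ℂ} (_ : H.IsHermitian) (w : Om k), (D w * H * (D w)ᴴ).IsHermitian := by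
    intro H hH w
    exact isHermitian_mul_mul_conjTranspose (D w) hH
  have hent : ∀ (H : Matrix n n ℂ) w j l, (D w * H * (D w)ᴴ) j l
      = H j l * uv k (fun i => x i j - x i l) w := by
    intro H w j l
    rw [hD, diagonal_conjTranspose, mul_diagonal, diagonal_mul, ← ev_uv]
    simp only [Pi.star_apply, RCLike.star_def]; ring
  have b := bil_main (n := n) hpq k c hc (fun w => D w * A * (D w)ᴴ) (fun w => D w * B * (D w)ᴴ)
    (hh hA) (hh hB)
  simp only [Np_conj _ (hDD _) hA, Np_conj _ (hDD _) hB, E_const] at b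
  refine le_trans (le_of_eq ?_) b
  have hTe : ∀ w j l, T k c (fun w => D w * A * (D w)ᴴ) w j l
      = A j l * T k c (uv k (fun i => x i j - x i l)) w := by
    intro w j l
    have := T_map (Matrix.entryLinearMap ℝ ℂ j l) k c (fun w => D w * A * (D w)ᴴ) w
    simp only [Matrix.entryLinearMap_apply] at this
    rw [← this, ← T_cmul]
    congr 1; funext w; exact hent A w j l
  have huc : ∀ w j l, uv k (fun i => x i l - x i j) w = (starRingEnd ℂ) (uv k (fun i => x i j - x i l) w) := by
    intro w j l; rw [← ev_uv, ← ev_uv, map_mul, Complex.conj_conj]; ring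
  have e : ∀ w, tr (T k c (fun w => D w * A * (D w)ᴴ) w * (D w * B * (D w)ᴴ))
      = ∑ j, ∑ l, ((A j l * B l j) * ((starRingEnd ℂ) (uv k (fun i => x i j - x i l) w)
        * T k c (uv k (fun i => x i j - x i l)) w)).re := by
    intro w
    simp only [tr, Matrix.trace, Matrix.diag]
    rw [Complex.re_sum]
    refine Finset.sum_congr rfl fun j _ => ?_
    rw [Matrix.mul_apply, Complex.re_sum]
    refine Finset.sum_congr rfl fun l _ => ?_
    rw [hTe, hent, huc]; congr 1; ring
  simp only [e]
  rw [E_sum, tr_Sm]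
  refine Finset.sum_congr rfl fun j _ => ?_
  rw [E_sum]
  refine Finset.sum_congr rfl fun l _ => ?_
  have := E_map Complex.reLm k (fun w => (A j l * B l j) * ((starRingEnd ℂ) (uv k (fun i => x i j - x i l) w)
        * T k c (uv k (fun i => x i j - x i l)) w))
  simp only [Complex.reLm_coe] at this
  rw [this, E_cmul, E_ms, Complex.re_mul_ofReal, mul_comm]

noncomputable def cc : ℕ → ℝ := fun i => if Even i then 0 else 1

lemma pis_alt (N : ℕ) (a b : ℝ) :
    pis (2 * N) (fun i => if Even i then a else b) ^ 2 = (Real.cos a ^ 2 * Real.cos b ^ 2) ^ N := by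
  induction N with
  | zero => simp [pis]
  | succ N ih =>
    rw [show 2 * (N + 1) = 2 * N + 1 + 1 by ring]
    simp only [pis, add_assoc]
    simp only [Nat.even_add, Nat.reduceAdd]
    simp
    rw [mul_pow, mul_pow, ih]; ring

lemma ms_alt (N : ℕ) (a b : ℝ) :
    ms (2 * N) cc (fun i => if Even i then a else b)
      = Real.sin b ^ 2 * ∑ i ∈ Finset.range N, (Real.cos a ^ 2 * Real.cos b ^ 2) ^ i := by
  induction N with
  | zero => simp [ms]
  | succ N ih =>
    have h1 : (fun i => cc (i + 1 + 1)) = cc := by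
      funext i; simp [cc, Nat.even_add, add_assoc]
    have h2 : (fun i : ℕ => if Even (i + 1 + 1) then a else b) = fun i => if Even i then a else b := by
      funext i; simp [Nat.even_add, add_assoc]
    rw [show 2 * (N + 1) = 2 * N + 1 + 1 by ring]
    simp only [ms, h1, h2, pis_alt, ih]
    rw [Finset.sum_range_succ]
    simp [cc]; ring

lemma Sy_h {p q : ℝ} (hpq : p.HolderConjugate q) (α β : n → ℝ) :
    Sy n p q (C1 * (p * q)) (fun j l => Real.sin (β j - β l) ^ 2 /
      (1 - Real.cos (α j - α l) ^ 2 * Real.cos (β j - β l) ^ 2)) := by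
  refine Sy_lim (l := Filter.atTop) (m := fun N j l => ms (2 * N) cc (fun i =>
    (if Even i then α j else β j) - (if Even i then α l else β l))) ?_ ?_
  · intro N
    exact Sy_ms hpq (2 * N) cc (fun i => by unfold cc; split_ifs <;> simp)
      (fun i j => if Even i then α j else β j)
  · intro j l
    have e : (fun i : ℕ => (if Even i then α j else β j) - (if Even i then α l else β l))
        = fun i => if Even i then α j - α l else β j - β l := by
      funext i; split_ifs <;> rfl
    simp only [e, ms_alt]
    set a := α j - α l
    set b := β j - β l
    have hs := Real.sin_sq_add_cos_sq b
    have hca := Real.cos_sq_le_one a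
    have hcb := Real.cos_sq_le_one b
    have h0 : 0 ≤ Real.cos a ^ 2 * Real.cos b ^ 2 := by positivity
    have hr : Real.cos a ^ 2 * Real.cos b ^ 2 ≤ 1 := by nlinarith [sq_nonneg (Real.cos a), sq_nonneg (Real.cos b)]
    rcases hr.eq_or_lt with h | h
    · have : Real.sin b ^ 2 = 0 := by nlinarith [sq_nonneg (Real.cos a), sq_nonneg (Real.cos b), sq_nonneg (Real.sin b)]
      simp [this]
    · rw [div_eq_mul_inv]
      exact (hasSum_geometric_of_lt_one h0 h).tendsto_sum_nat.const_mul _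

lemma Sy_riesz {p q : ℝ} (hpq : p.HolderConjugate q) (α β : n → ℝ) :
    Sy n p q (C1 * (p * q)) (fun j l => (β j - β l) ^ 2 /
      ((α j - α l) ^ 2 + (β j - β l) ^ 2)) := by
  refine Sy_lim (l := nhdsWithin (0:ℝ) {0}ᶜ) (m := fun h j l => Real.sin (h * β j - h * β l) ^ 2 /
      (1 - Real.cos (h * α j - h * α l) ^ 2 * Real.cos (h * β j - h * β l) ^ 2)) ?_ ?_
  · intro h; exact Sy_h hpq (fun j => h * α j) (fun j => h * β j)
  · intro j l
    simp only [← mul_sub]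
    set a := α j - α l
    set b := β j - β l
    by_cases hz : a ^ 2 + b ^ 2 = 0
    · have hb : b = 0 := by nlinarith [sq_nonneg a, sq_nonneg b]
      simp [hb]
    have hsin : ∀ y : ℝ, Filter.Tendsto (fun h : ℝ => Real.sin (h * y) / h) (nhdsWithin (0:ℝ) {0}ᶜ) (nhds y) := by
      intro y
      have : HasDerivAt (fun h : ℝ => Real.sin (h * y)) y 0 := by
        have := ((hasDerivAt_id (0:ℝ)).mul_const y).sin
        simpa using this
      have := hasDerivAt_iff_tendsto_slope.1 this
      refine this.congr fun h => ?_
      simp [slope_def_field]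
    have hcos : ∀ y : ℝ, Filter.Tendsto (fun h : ℝ => Real.cos (h * y)) (nhdsWithin (0:ℝ) {0}ᶜ) (nhds 1) := by
      intro y
      have : Continuous (fun h : ℝ => Real.cos (h * y)) := by fun_prop
      have := this.tendsto 0
      simp only [zero_mul, Real.cos_zero] at this
      exact this.mono_left nhdsWithin_le_nhds
    have key : Filter.Tendsto (fun h : ℝ => (Real.sin (h * b) / h) ^ 2 /
        ((Real.sin (h * a) / h) ^ 2 + Real.cos (h * a) ^ 2 * (Real.sin (h * b) / h) ^ 2))
        (nhdsWithin (0:ℝ) {0}ᶜ) (nhds (b ^ 2 / (a ^ 2 + 1 ^ 2 * b ^ 2))) := by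
      refine ((hsin b).pow 2).div (((hsin a).pow 2).add (((hcos a).pow 2).mul ((hsin b).pow 2))) ?_
      simpa using hz
    simp only [one_pow, one_mul] at key
    refine key.congr' ?_
    filter_upwards [self_mem_nhdsWithin] with h hh
    have hh : h ≠ 0 := hh
    have : 1 - Real.cos (h * a) ^ 2 * Real.cos (h * b) ^ 2
      = Real.sin (h * a) ^ 2 + Real.cos (h * a) ^ 2 * Real.sin (h * b) ^ 2 := by
      rw [Real.sin_sq, Real.sin_sq]; ring
    rw [this]
    simp only [div_pow, ← mul_div_assoc, ← add_div]
    rw [div_div_div_cancel_right₀ (by positivity)]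

end LS


namespace LS
set_option linter.unusedSectionVars false
set_option linter.unusedDecidableInType false
open scoped ComplexOrder
variable {n : Type*} [Fintype n] [DecidableEq n]

lemma Sy_neg {p q K : ℝ} {m : n → n → ℝ} (h : Sy n p q K m) : Sy n p q K (fun j k => - m j k) := by
  intro A B hA hB
  have := h (-A) B hA.neg hB
  rw [Np_neg p hA] at this
  refine le_trans (le_of_eq ?_) this
  simp only [tr_Sm]
  refine Finset.sum_congr rfl fun j _ => Finset.sum_congr rfl fun k _ => ?_
  simp
  ring

lemma Sy_add {p q K K' : ℝ} {m m' : n → n → ℝ} (h : Sy n p q K m) (h' : Sy n p q K' m') :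
    Sy n p q (K + K') (fun j k => m j k + m' j k) := by
  intro A B hA hB
  have e : tr (Sm (fun j k => m j k + m' j k) A * B) = tr (Sm m A * B) + tr (Sm m' A * B) := by
    simp only [tr_Sm, add_mul, Finset.sum_add_distrib]
  rw [e, add_mul]
  exact add_le_add (h A B hA hB) (h' A B hA hB)

lemma Sy_smul0 {p q K a : ℝ} (ha : 0 ≤ a) {m : n → n → ℝ} (h : Sy n p q K m) :
    Sy n p q (a * K) (fun j k => a * m j k) := by
  intro A B hA hB
  have e : tr (Sm (fun j k => a * m j k) A * B) = a * tr (Sm m A * B) := by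
    simp only [tr_Sm, Finset.mul_sum, mul_assoc]
  rw [e, mul_assoc]
  exact mul_le_mul_of_nonneg_left (h A B hA hB) ha

lemma Sy_smul {p q K : ℝ} (a : ℝ) {m : n → n → ℝ} (h : Sy n p q K m) :
    Sy n p q (|a| * K) (fun j k => a * m j k) := by
  rcases le_total 0 a with ha | ha
  · rw [abs_of_nonneg ha]; exact Sy_smul0 ha h
  · rw [abs_of_nonpos ha]
    have := Sy_smul0 (neg_nonneg.2 ha) (Sy_neg h)
    simpa using this

lemma Sy_mono {p q K K' : ℝ} (hp : 0 < p) (hq : 0 < q) (hK : K ≤ K') {m : n → n → ℝ}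
    (h : Sy n p q K m) : Sy n p q K' m := by
  intro A B hA hB
  refine (h A B hA hB).trans (mul_le_mul_of_nonneg_right hK ?_)
  have := Np_nonneg p A
  have := Np_nonneg q B
  positivity

lemma Sy_one {p q : ℝ} (hpq : p.HolderConjugate q) : Sy n p q 1 (fun _ _ => 1) := by
  intro A B hA hB
  have : Sm (fun _ _ => 1) A = A := by ext j k; simp [Sm]
  rw [this, one_mul]; exact tr_young hpq hA hB

lemma Sy_int {p q K : ℝ} {m : ℝ → n → n → ℝ} (h : ∀ θ, Sy n p q K (m θ))
    (hi : ∀ j k, IntervalIntegrable (fun θ => m θ j k) MeasureTheory.volume 0 (2 * Real.pi)) :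
    Sy n p q (2 * Real.pi * K) (fun j k => ∫ θ in (0)..(2 * Real.pi), m θ j k) := by
  intro A B hA hB
  have hj : ∀ j k, IntervalIntegrable (fun θ => m θ j k * (A j k * B k j).re)
      MeasureTheory.volume 0 (2 * Real.pi) := fun j k => (hi j k).mul_const _
  have hjs : ∀ j, IntervalIntegrable (fun θ => ∑ k, m θ j k * (A j k * B k j).re)
      MeasureTheory.volume 0 (2 * Real.pi) := by
    intro j
    have := IntervalIntegrable.sum Finset.univ (fun k _ => hj j k)
    simpa [Finset.sum_fn] using this
  have hjss : IntervalIntegrable (fun θ => ∑ j, ∑ k, m θ j k * (A j k * B k j).re)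
      MeasureTheory.volume 0 (2 * Real.pi) := by
    have := IntervalIntegrable.sum Finset.univ (fun j _ => hjs j)
    simpa [Finset.sum_fn] using this
  have e : tr (Sm (fun j k => ∫ θ in (0)..(2 * Real.pi), m θ j k) A * B)
      = ∫ θ in (0)..(2 * Real.pi), tr (Sm (m θ) A * B) := by
    simp only [tr_Sm]
    rw [intervalIntegral.integral_finsetSum fun j _ => hjs j]
    refine Finset.sum_congr rfl fun j _ => ?_
    rw [intervalIntegral.integral_finsetSum fun k _ => hj j k]
    refine Finset.sum_congr rfl fun k _ => ?_
    rw [intervalIntegral.integral_mul_const]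
  rw [e]
  have hpi : (0:ℝ) ≤ 2 * Real.pi := by positivity
  have := intervalIntegral.integral_mono_on (μ := MeasureTheory.volume) hpi
    (by simpa only [tr_Sm] using hjss) (intervalIntegrable_const (c := K * (Np p A / p + Np q B / q)))
    (fun θ _ => h θ A B hA hB)
  refine this.trans (le_of_eq ?_)
  rw [intervalIntegral.integral_const]; simp; ring

lemma poisson_int {t : ℝ} (ht : |t| < 1) :
    ∫ θ in (0)..(2 * Real.pi), (1 - t ^ 2) / (1 - 2 * t * Real.cos θ + t ^ 2) = 2 * Real.pi := by
  have hw : (t : ℂ) ∈ Metric.ball (0:ℂ) 1 := by simpa using ht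
  have hf : DiffContOnCl ℂ (fun _ : ℂ => (1:ℂ)) (Metric.ball 0 1) := diffContOnCl_const
  have h := hf.circleAverage_poissonKernel_smul hw
  rw [Real.circleAverage_def] at h
  have e : ∀ θ : ℝ, (poissonKernel 0 (t:ℂ) • (fun _ : ℂ => (1:ℂ))) (circleMap 0 1 θ)
      = (((1 - t ^ 2) / (1 - 2 * t * Real.cos θ + t ^ 2) : ℝ) : ℂ) := by
    intro θ
    simp only [Pi.smul_apply', poissonKernel_def, sub_zero, Complex.real_smul, mul_one]
    congr 1
    have h1 : ‖circleMap 0 1 θ‖ = 1 := by simp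
    have h2 : ‖circleMap 0 1 θ - (t:ℂ)‖ ^ 2 = 1 - 2 * t * Real.cos θ + t ^ 2 := by
      rw [← Complex.normSq_eq_norm_sq, Complex.normSq_apply]
      simp only [circleMap, zero_add, Complex.ofReal_one, one_mul, Complex.sub_re, Complex.sub_im,
        Complex.ofReal_re, Complex.ofReal_im, Complex.exp_ofReal_mul_I_re, Complex.exp_ofReal_mul_I_im]
      have := Real.sin_sq_add_cos_sq θ
      nlinarith
    rw [h1, h2]; simp
  simp only [e] at h
  rw [intervalIntegral.integral_ofReal, Complex.real_smul] at h
  have h' : (2 * Real.pi)⁻¹ * ∫ θ in (0)..(2 * Real.pi), (1 - t ^ 2) / (1 - 2 * t * Real.cos θ + t ^ 2) = 1 := by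
    exact_mod_cast h
  have hpi : (2 * Real.pi) ≠ 0 := by positivity
  field_simp at h'
  linarith

lemma D_pos {t : ℝ} (ht : |t| < 1) (θ : ℝ) : 0 < 1 - 2 * t * Real.cos θ + t ^ 2 := by
  have h1 := Real.sin_sq_add_cos_sq θ
  have ht' := abs_lt.1 ht
  have hc := Real.cos_le_one θ
  have hc' := Real.neg_one_le_cos θ
  have : 1 - 2 * t * Real.cos θ + t ^ 2 = Real.sin θ ^ 2 + (Real.cos θ - t) ^ 2 := by nlinarith
  rw [this]
  rcases eq_or_ne (Real.sin θ) 0 with h | h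
  · have : Real.cos θ - t ≠ 0 := by
      intro h0; rw [h] at h1
      have : t = Real.cos θ := by linarith
      nlinarith
    positivity
  · positivity

lemma sin_int {t : ℝ} (ht : |t| < 1) :
    ∫ θ in (0)..(2 * Real.pi), t * Real.sin θ ^ 2 / (1 - 2 * t * Real.cos θ + t ^ 2) = Real.pi * t := by
  rcases eq_or_ne t 0 with h0 | h0
  · simp [h0]
  have hD := D_pos ht
  have ht1 : 1 - t ^ 2 ≠ 0 := by
    have := abs_lt.1 ht
    nlinarith
  have e : ∀ θ : ℝ, t * Real.sin θ ^ 2 / (1 - 2 * t * Real.cos θ + t ^ 2)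
      = (1 / (4 * t)) * ((1 + t ^ 2) + 2 * t * Real.cos θ
        - (1 - t ^ 2) * ((1 - t ^ 2) / (1 - 2 * t * Real.cos θ + t ^ 2))) := by
    intro θ
    have := (hD θ).ne'
    rw [Real.sin_sq]
    generalize hd : 1 - 2 * t * Real.cos θ + t ^ 2 = d at this ⊢
    field_simp
    linear_combination (1 + t ^ 2 + 2 * t * Real.cos θ) * hd
  simp only [e]
  have c1 : Continuous fun θ : ℝ => (1 - t ^ 2) / (1 - 2 * t * Real.cos θ + t ^ 2) :=
    continuous_const.div (by fun_prop) fun θ => (hD θ).ne'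
  rw [intervalIntegral.integral_const_mul, intervalIntegral.integral_sub,
    intervalIntegral.integral_const_mul, poisson_int ht, intervalIntegral.integral_add]
  · simp
    field_simp
    ring
  · simp
  · exact Continuous.intervalIntegrable (by fun_prop) _ _
  · exact Continuous.intervalIntegrable (by fun_prop) _ _
  · exact Continuous.intervalIntegrable (by fun_prop) _ _

lemma Sy_div {p q : ℝ} (hpq : p.HolderConjugate q) (x y : n → ℝ)
    (hxy : ∀ j k, |y j - y k| ≤ |x j - x k| / 2) :
    ∃ m : n → n → ℝ, Sy n p q (6 * (C1 * (p * q))) m ∧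
      ∀ j k, x j ≠ x k → m j k = (y j - y k) / (x j - x k) := by
  set K := C1 * (p * q) with hK
  have hp := hpq.lt
  have hq := hpq.symm.lt
  have hK1 : 1 ≤ K := by
    have := C1_pos
    have : 1 ≤ p * q := by nlinarith
    rw [hK]; nlinarith
  set R : (n → ℝ) → (n → ℝ) → n → n → ℝ := fun α β j l =>
    (β j - β l) ^ 2 / ((α j - α l) ^ 2 + (β j - β l) ^ 2) with hR
  set v1 : ℝ → n → ℝ := fun θ j => y j - Real.cos θ * x j with hv1
  set v2 : ℝ → n → ℝ := fun θ j => Real.sin θ * x j with hv2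
  set M : ℝ → n → n → ℝ := fun θ j k =>
    Real.sin θ * (R (fun i => v1 θ i - v2 θ i) (fun i => v1 θ i + v2 θ i) j k + (-(1/2)) * 1)
      + Real.cos θ * R (v1 θ) (v2 θ) j k with hM
  have hMS : ∀ θ, Sy n p q (3 * K) (M θ) := by
    intro θ
    have a1 := Sy_smul (Real.sin θ) (Sy_add (Sy_riesz hpq (fun i => v1 θ i - v2 θ i) (fun i => v1 θ i + v2 θ i))
      (Sy_smul (-(1/2)) (Sy_one (n := n) hpq)))
    have a2 := Sy_smul (Real.cos θ) (Sy_riesz hpq (v1 θ) (v2 θ))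
    refine Sy_mono hpq.pos hpq.symm.pos ?_ (Sy_add a1 a2)
    rw [← hK]
    have b1 := Real.abs_sin_le_one θ
    have b2 := Real.abs_cos_le_one θ
    have b3 : |(-(1/2) : ℝ)| = 1/2 := by norm_num [abs_of_pos]
    rw [b3]
    nlinarith [abs_nonneg (Real.sin θ), abs_nonneg (Real.cos θ)]
  have hMe : ∀ j k, x j ≠ x k → ∀ θ, M θ j k = ((y j - y k) / (x j - x k)) * Real.sin θ ^ 2
      / (1 - 2 * ((y j - y k) / (x j - x k)) * Real.cos θ + ((y j - y k) / (x j - x k)) ^ 2)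
      ∧ |(y j - y k) / (x j - x k)| < 1 := by
    intro j k hjk θ
    have hx : x j - x k ≠ 0 := sub_ne_zero.2 hjk
    set X := x j - x k with hX
    set t := (y j - y k) / X with ht
    have hy : y j - y k = t * X := by rw [ht]; field_simp
    have htl : |t| < 1 := by
      rw [ht, abs_div, div_lt_one (abs_pos.2 hx)]
      have := hxy j k
      have := abs_pos.2 hx
      linarith
    refine ⟨?_, htl⟩
    have hD := (D_pos htl θ)
    set D := 1 - 2 * t * Real.cos θ + t ^ 2 with hDd
    have hsc := Real.sin_sq_add_cos_sq θ
    have e1 : v1 θ j - v1 θ k = X * (t - Real.cos θ) := by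
      simp only [hv1]
      have : y j - Real.cos θ * x j - (y k - Real.cos θ * x k) = (y j - y k) - Real.cos θ * X := by rw [hX]; ring
      rw [this, hy]; ring
    have e2 : v2 θ j - v2 θ k = X * Real.sin θ := by
      simp only [hv2]; rw [hX]; ring
    have hDe : (t - Real.cos θ) ^ 2 + Real.sin θ ^ 2 = D := by rw [hDd]; nlinarith
    have r1 : R (v1 θ) (v2 θ) j k = Real.sin θ ^ 2 / D := by
      simp only [hR]
      rw [e1, e2, mul_pow, mul_pow, ← mul_add, hDe, mul_div_mul_left _ _ (by positivity)]
    have r2 : R (fun i => v1 θ i - v2 θ i) (fun i => v1 θ i + v2 θ i) j k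
        = 1 / 2 + (t - Real.cos θ) * Real.sin θ / D := by
      simp only [hR]
      have e3 : v1 θ j + v2 θ j - (v1 θ k + v2 θ k) = X * (t - Real.cos θ + Real.sin θ) := by
        linear_combination e1 + e2
      have e4 : v1 θ j - v2 θ j - (v1 θ k - v2 θ k) = X * (t - Real.cos θ - Real.sin θ) := by
        linear_combination e1 - e2
      have e5 : (t - Real.cos θ - Real.sin θ) ^ 2 + (t - Real.cos θ + Real.sin θ) ^ 2 = 2 * D := by
        rw [← hDe]; ring
      rw [e3, e4, mul_pow, mul_pow, ← mul_add, e5, mul_div_mul_left _ _ (by positivity)]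
      have : (t - Real.cos θ + Real.sin θ) ^ 2 = D + 2 * ((t - Real.cos θ) * Real.sin θ) := by
        rw [← hDe]; ring
      rw [this]; field_simp
    simp only [hM]
    rw [r1, r2]
    field_simp
    ring
  have hcont : ∀ j k, Continuous (fun θ => M θ j k) := by
    intro j k
    by_cases hjk : x j = x k
    · have hy : y j = y k := by
        have := hxy j k
        rw [hjk, sub_self, abs_zero, zero_div] at this
        have := abs_nonpos_iff.1 this
        linarith
      simp only [hM, hR, hv1, hv2, hjk, hy]
      simp only [sub_self]
      fun_prop
    · have : (fun θ => M θ j k) = _ := funext fun θ => (hMe j k hjk θ).1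
      rw [this]
      exact Continuous.div (by fun_prop) (by fun_prop) fun θ => (D_pos (hMe j k hjk 0).2 θ).ne'
  have hS := Sy_smul (1 / Real.pi) (Sy_int hMS fun j k => (hcont j k).intervalIntegrable _ _)
  have hpi := Real.pi_pos
  refine ⟨_, Sy_mono hpq.pos hpq.symm.pos (le_of_eq ?_) hS, ?_⟩
  · rw [abs_of_pos (by positivity)]; field_simp; ring
  · intro j k hjk
    have : ∀ θ, M θ j k = _ := fun θ => (hMe j k hjk θ).1
    simp only [this]
    rw [sin_int (hMe j k hjk 0).2]
    field_simp

end LS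


namespace LS
set_option linter.unusedSectionVars false
set_option linter.unusedDecidableInType false
open scoped ComplexOrder
variable {n : Type*} [Fintype n] [DecidableEq n]

lemma Np_of_Sy {p q K : ℝ} (hpq : p.HolderConjugate q) (hK : 0 < K) {m : n → n → ℝ}
    (h : Sy n p q K m) {Z : Matrix n n ℂ} (hZ : Z.IsHermitian) (hC : (Sm m Z).IsHermitian) :
    Np p (Sm m Z) ≤ K ^ p * Np p Z := by
  obtain ⟨B, hB, h1, h2⟩ := exists_dual hpq hC
  have := h (K • Z) B (herm_smul K hZ) hB
  have e : Sm m (K • Z) = K • Sm m Z := by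
    ext j k; simp [Sm]; ring
  rw [e, tr_smul_mul, h1, Np_smul p K hZ, abs_of_pos hK, h2] at this
  have this := le_of_mul_le_mul_left this hK
  have hp := hpq.pos
  set X := Np p (Sm m Z)
  have hx : X = X / p + X / q := by
    have := hpq.inv_add_inv_eq_one
    calc X = X * (p⁻¹ + q⁻¹) := by rw [this, mul_one]
      _ = _ := by ring
  have h4 : X / p ≤ K ^ p * Np p Z / p := by linarith
  exact (div_le_div_iff_of_pos_right hp).1 h4

lemma Np_anti (p : ℝ) {H : Matrix n n ℂ} (hH : H.IsHermitian) :
    (fromBlocks 0 H H 0 : Matrix (n ⊕ n) (n ⊕ n) ℂ).IsHermitian ∧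
    Np p (fromBlocks 0 H H 0 : Matrix (n ⊕ n) (n ⊕ n) ℂ) = 2 * Np p H := by
  obtain ⟨R, η, hR, rfl⟩ := exists_Sp' hH
  set s : ℂ := ((Real.sqrt (1/2) : ℝ) : ℂ) with hs
  have hss : s * s = 1/2 := by
    rw [hs, ← Complex.ofReal_mul, Real.mul_self_sqrt (by norm_num)]; norm_num
  have hss' : ∀ X : Matrix n n ℂ, s • s • X = (1/2 : ℂ) • X := fun X => by rw [smul_smul, hss]
  have hsc : star s = s := by rw [hs]; simp
  set R' : Matrix (n ⊕ n) (n ⊕ n) ℂ := fromBlocks (s • R) (s • R) (s • R) (-(s • R)) with hR'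
  have hR'c : R'ᴴ = fromBlocks (s • Rᴴ) (s • Rᴴ) (s • Rᴴ) (-(s • Rᴴ)) := by
    rw [hR', fromBlocks_conjTranspose]
    simp [conjTranspose_smul, hsc]
  have hU : R'ᴴ * R' = 1 := by
    rw [hR'c, hR', fromBlocks_multiply, ← fromBlocks_one]
    simp only [Matrix.smul_mul, Matrix.mul_smul, Matrix.neg_mul, Matrix.mul_neg, hR, smul_neg, hss']
    congr 1 <;> module
  have e : (fromBlocks 0 (Sp R η) (Sp R η) 0 : Matrix (n ⊕ n) (n ⊕ n) ℂ)
      = Sp R' (Sum.elim η (fun i => - η i)) := by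
    have hd : (diagonal (fun i => ((Sum.elim η (fun i => - η i) i : ℝ) : ℂ)) : Matrix (n ⊕ n) (n ⊕ n) ℂ)
        = fromBlocks (diagonal (fun i => (η i : ℂ))) 0 0 (-diagonal (fun i => (η i : ℂ))) := by
      rw [diagonal_neg, fromBlocks_diagonal]
      congr 1; funext i; cases i <;> simp
    unfold Sp
    rw [hd, hR'c, hR', fromBlocks_multiply, fromBlocks_multiply]
    simp only [Matrix.smul_mul, Matrix.mul_smul, Matrix.neg_mul, Matrix.mul_neg, smul_neg, hss',
      Matrix.mul_zero, zero_add, add_zero]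
    congr 1 <;> module
  rw [e]
  refine ⟨Sp_herm _ _, ?_⟩
  rw [Np_Sp p hU, Np_Sp p hR, Fintype.sum_sum_type]
  simp [two_mul]

lemma blk_conj {U V : Matrix n n ℂ} (H : Matrix n n ℂ) :
    (fromBlocks Uᴴ 0 0 Vᴴ : Matrix (n ⊕ n) (n ⊕ n) ℂ) * fromBlocks 0 H H 0 * (fromBlocks Uᴴ 0 0 Vᴴ)ᴴ
      = fromBlocks 0 (Uᴴ * H * V) (Vᴴ * H * U) 0 := by
  rw [fromBlocks_conjTranspose, fromBlocks_multiply, fromBlocks_multiply]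
  simp

lemma Np_blk (p : ℝ) {U V H : Matrix n n ℂ} (hU : U * Uᴴ = 1) (hV : V * Vᴴ = 1) (hH : H.IsHermitian) :
    (fromBlocks 0 (Uᴴ * H * V) (Vᴴ * H * U) 0 : Matrix (n ⊕ n) (n ⊕ n) ℂ).IsHermitian ∧
    Np p (fromBlocks 0 (Uᴴ * H * V) (Vᴴ * H * U) 0 : Matrix (n ⊕ n) (n ⊕ n) ℂ) = 2 * Np p H := by
  obtain ⟨h1, h2⟩ := Np_anti p hH
  rw [← blk_conj]
  refine ⟨isHermitian_mul_mul_conjTranspose _ h1, ?_⟩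
  rw [Np_conj p _ h1, h2]
  rw [fromBlocks_conjTranspose, fromBlocks_multiply]
  simp [hU, hV]

lemma blk_entry {U V : Matrix n n ℂ} (hU : Uᴴ * U = 1) (hV : Vᴴ * V = 1) (a b : n → ℝ) :
    (∀ j k, (Uᴴ * (Sp U a - Sp V b) * V) j k = ((a j - b k : ℝ) : ℂ) * (Uᴴ * V) j k) ∧
    (∀ j k, (Vᴴ * (Sp U a - Sp V b) * U) j k = ((a k - b j : ℝ) : ℂ) * (Vᴴ * U) j k) := by
  have e1 : Uᴴ * (Sp U a - Sp V b) * V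
      = diagonal (fun i => (a i : ℂ)) * (Uᴴ * V) - (Uᴴ * V) * diagonal (fun i => (b i : ℂ)) := by
    unfold Sp
    calc _ = (Uᴴ * U) * diagonal (fun i => (a i : ℂ)) * (Uᴴ * V)
          - (Uᴴ * V) * diagonal (fun i => (b i : ℂ)) * (Vᴴ * V) := by noncomm_ring
      _ = _ := by rw [hU, hV, Matrix.one_mul, Matrix.mul_one]
  have e2 : Vᴴ * (Sp U a - Sp V b) * U
      = (Vᴴ * U) * diagonal (fun i => (a i : ℂ)) - diagonal (fun i => (b i : ℂ)) * (Vᴴ * U) := by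
    unfold Sp
    calc _ = (Vᴴ * U) * diagonal (fun i => (a i : ℂ)) * (Uᴴ * U)
          - (Vᴴ * V) * diagonal (fun i => (b i : ℂ)) * (Vᴴ * U) := by noncomm_ring
      _ = _ := by rw [hU, hV, Matrix.one_mul, Matrix.mul_one]
  constructor
  · intro j k; rw [e1, Matrix.sub_apply, diagonal_mul, mul_diagonal]; push_cast; ring
  · intro j k; rw [e2, Matrix.sub_apply, diagonal_mul, mul_diagonal]; push_cast; ring

lemma Np_lip {p q : ℝ} (hpq : p.HolderConjugate q) {f : ℝ → ℝ} (hf : LipschitzWith 1 f)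
    {U V : Matrix n n ℂ} (hU : Uᴴ * U = 1) (hV : Vᴴ * V = 1) (μ ν : n → ℝ) :
    Np p (Sp U (fun i => f (μ i)) - Sp V (fun i => f (ν i)))
      ≤ (12 * (C1 * (p * q))) ^ p * Np p (Sp U μ - Sp V ν) := by
  have hU' := mul_eq_one_comm.1 hU
  have hV' := mul_eq_one_comm.1 hV
  set H := Sp U μ - Sp V ν with hH
  set G := Sp U (fun i => f (μ i)) - Sp V (fun i => f (ν i)) with hG
  have hHh : H.IsHermitian := (Sp_herm _ _).sub (Sp_herm _ _)
  have hGh : G.IsHermitian := (Sp_herm _ _).sub (Sp_herm _ _)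
  obtain ⟨z1, z2⟩ := Np_blk p hU' hV' hHh
  obtain ⟨g1, g2⟩ := Np_blk p hU' hV' hGh
  set Z : Matrix (n ⊕ n) (n ⊕ n) ℂ := fromBlocks 0 (Uᴴ * H * V) (Vᴴ * H * U) 0 with hZ
  set Y : Matrix (n ⊕ n) (n ⊕ n) ℂ := fromBlocks 0 (Uᴴ * G * V) (Vᴴ * G * U) 0 with hY
  obtain ⟨m, hm, hme⟩ := Sy_div (n := n ⊕ n) hpq (Sum.elim μ ν)
    (fun i => f (Sum.elim μ ν i) / 2) (by
      intro j k
      have := hf.dist_le_mul (Sum.elim μ ν j) (Sum.elim μ ν k)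
      rw [Real.dist_eq, Real.dist_eq, NNReal.coe_one, one_mul] at this
      rw [← sub_div, abs_div, abs_of_pos (show (0:ℝ) < 2 by norm_num)]
      linarith)
  obtain ⟨b1, b2⟩ := blk_entry hU hV μ ν
  obtain ⟨b3, b4⟩ := blk_entry hU hV (fun i => f (μ i)) (fun i => f (ν i))
  have hSm : Sm m Z = (1/2 : ℝ) • Y := by
    ext j k
    rcases j with j | j <;> rcases k with k | k
    · simp [Sm, hZ, hY]
    · simp only [Sm, hZ, hY, Matrix.of_apply, Matrix.smul_apply, fromBlocks_apply₁₂]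
      rw [hH, hG, b1, b3]
      by_cases hx : μ j = ν k
      · simp [hx]
      · have h' : ((μ j : ℂ) - ν k) ≠ 0 := by exact_mod_cast sub_ne_zero.2 hx
        rw [hme (Sum.inl j) (Sum.inr k) (by simpa using hx)]
        simp only [Sum.elim_inl, Sum.elim_inr, Complex.real_smul]
        push_cast
        field_simp
    · simp only [Sm, hZ, hY, Matrix.of_apply, Matrix.smul_apply, fromBlocks_apply₂₁]
      rw [hH, hG, b2, b4]
      by_cases hx : ν j = μ k
      · simp [hx]
      · have h' : ((ν j : ℂ) - μ k) ≠ 0 := by exact_mod_cast sub_ne_zero.2 hx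
        rw [hme (Sum.inr j) (Sum.inl k) (by simpa using hx)]
        simp only [Sum.elim_inl, Sum.elim_inr, Complex.real_smul]
        push_cast
        field_simp
        ring
    · simp [Sm, hZ, hY]
  have hp := hpq.pos
  have hq := hpq.symm.pos
  have hC1 := C1_pos
  have hK : 0 < 6 * (C1 * (p * q)) := by
    have : 0 < C1 := by linarith
    positivity
  have fin := Np_of_Sy hpq hK hm z1 (by rw [hSm]; exact herm_smul _ g1)
  rw [hSm, Np_smul p _ g1, g2, z2, abs_of_pos (by norm_num)] at fin
  have e : (12 * (C1 * (p * q))) ^ p = 2 ^ p * (6 * (C1 * (p * q))) ^ p := by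
    rw [← Real.mul_rpow (by norm_num) hK.le]; congr 1; ring
  have e2 : (2:ℝ) ^ p * (1/2) ^ p = 1 := by
    rw [← Real.mul_rpow (by norm_num) (by norm_num)]; norm_num
  have h2 : (0:ℝ) < 2 ^ p := by positivity
  have := mul_le_mul_of_nonneg_left fin h2.le
  rw [e]
  have e3 : 2 ^ p * ((1 / 2) ^ p * (2 * Np p G)) = 2 * Np p G := by
    linear_combination (2 * Np p G) * e2
  rw [e3] at this
  linarith

lemma schatten_eq {d : ℕ} (p : ℝ) {H : Matrix (Fin d) (Fin d) ℂ} (hH : H.IsHermitian) :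
    (∑ i, Real.sqrt ((Matrix.isHermitian_conjTranspose_mul_self H).eigenvalues i) ^ p) = Np p H := by
  obtain ⟨W, ζ, hW, e, hζ⟩ := exists_Sp (Matrix.isHermitian_conjTranspose_mul_self H)
  obtain ⟨R, η, hR, he⟩ := exists_Sp' hH
  have h2 : Hᴴ * H = Sp R (fun i => η i * η i) := by
    rw [hH.eq]; conv_lhs => rw [he]
    rw [Sp_mul hR]
  have := Sp_sum_eq hW hR (e.symm.trans h2) (fun u => Real.sqrt u ^ p)
  rw [← hζ, this]
  conv_rhs => rw [he]
  rw [Np_Sp p hR]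
  refine Finset.sum_congr rfl fun i _ => ?_
  rw [Real.sqrt_mul_self_eq_abs]

end LS

/-- Matrix (dimension-free) form of Corollary 5.5 of the paper: there is an absolute
constant `C > 0` such that for all `p ∈ (1,∞)`, all `d ≥ 1`, every `1`-Lipschitz
`f : ℝ → ℝ` and all `d×d` Hermitian matrices `X = U diag(μ) U*`, `Y = V diag(ν) V*`,
`‖f(X) − f(Y)‖_p ≤ C (p²/(p−1)) ‖X − Y‖_p`. -/
theorem lipschitz_schatten_matrix :
    ∃ C : ℝ, 0 < C ∧ ∀ (p : ℝ), 1 < p → ∀ (d : ℕ), 1 ≤ d →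
      ∀ (f : ℝ → ℝ), LipschitzWith 1 f →
      ∀ (X Y U V : Matrix (Fin d) (Fin d) ℂ) (μ ν : Fin d → ℝ),
        U ∈ Matrix.unitaryGroup (Fin d) ℂ → V ∈ Matrix.unitaryGroup (Fin d) ℂ →
        X = U * Matrix.diagonal (fun i => (μ i : ℂ)) * Uᴴ →
        Y = V * Matrix.diagonal (fun i => (ν i : ℂ)) * Vᴴ →
        schattenNorm p
            (U * Matrix.diagonal (fun i => (f (μ i) : ℂ)) * Uᴴ
              - V * Matrix.diagonal (fun i => (f (ν i) : ℂ)) * Vᴴ)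
          ≤ C * (p ^ 2 / (p - 1)) * schattenNorm p (X - Y) := by
  refine ⟨12 * LS.C1, by have := LS.C1_pos; linarith, ?_⟩
  intro p hp d _ f hf X Y U V μ ν hU hV hX hY
  have hU1 : Uᴴ * U = 1 := Matrix.mem_unitaryGroup_iff'.mp hU
  have hV1 : Vᴴ * V = 1 := Matrix.mem_unitaryGroup_iff'.mp hV
  have hpq : p.HolderConjugate (p / (p - 1)) := Real.HolderConjugate.conjExponent hp
  have key := LS.Np_lip hpq hf hU1 hV1 μ ν
  have hC1 := LS.C1_pos
  have e : p * (p / (p - 1)) = p ^ 2 / (p - 1) := by ring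
  rw [e] at key
  have hHh : (LS.Sp U μ - LS.Sp V ν).IsHermitian := (LS.Sp_herm _ _).sub (LS.Sp_herm _ _)
  have hGh : (LS.Sp U (fun i => f (μ i)) - LS.Sp V (fun i => f (ν i))).IsHermitian :=
    (LS.Sp_herm _ _).sub (LS.Sp_herm _ _)
  have hXY : X - Y = LS.Sp U μ - LS.Sp V ν := by rw [hX, hY]; rfl
  rw [hXY]
  change schattenNorm p (LS.Sp U (fun i => f (μ i)) - LS.Sp V (fun i => f (ν i))) ≤ _
  unfold schattenNorm singularValues
  rw [LS.schatten_eq p hHh, LS.schatten_eq p hGh]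
  have hp0 : 0 < p := by linarith
  have hp1 : 0 < p - 1 := by linarith
  have hK : 0 ≤ 12 * (LS.C1 * (p ^ 2 / (p - 1))) := by
    have : 0 < LS.C1 := by linarith
    positivity
  refine (Real.rpow_le_rpow (LS.Np_nonneg _ _) key (by positivity)).trans (le_of_eq ?_)
  rw [Real.mul_rpow (Real.rpow_nonneg hK p) (LS.Np_nonneg _ _), ← Real.rpow_mul hK,
    mul_one_div_cancel hp0.ne', Real.rpow_one]
  ring
end
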